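/- Let s be an even integer with s ≥ 6, let N ≥ 2s, and let x,y ∈ SO(3) with ω(y⁻¹x) ≥ π/(2(N+1)). Then for all indices n, i ∈ {1,2,3}: |X_n^y σ_N(x,y)| ≤ c_{1,s}/((N+1)^{s−1}·ω(y⁻¹x)^s) and |X_i^x X_n^y σ_N(x,y)| ≤ c_{2,s}/((N+1)^{s−2}·ω(y⁻¹x)^s). -/

import Mathlib

noncomputable section

abbrev Mat3 := Matrix (Fin 3) (Fin 3) ℝ

/-- membership in SO(3) -/
def IsSO3 (x : Mat3) : Prop := x.transpose * x = 1 ∧ x.det = 1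

/-- rotation angle -/
def rotAngle (x : Mat3) : ℝ := Real.arccos ((Matrix.trace x - 1) / 2)

/-- generators of so(3) -/
def Lgen : Fin 3 → Mat3 :=
  ![!![0, 0, 0; 0, 0, -1; 0, 1, 0],
    !![0, 0, 1; 0, 0, 0; -1, 0, 0],
    !![0, -1, 0; 1, 0, 0; 0, 0, 0]]

/-- derivative in the first variable along generator `i` -/
def Xx (i : Fin 3) (f : Mat3 → Mat3 → ℝ) : Mat3 → Mat3 → ℝ :=
  fun x y => deriv (fun t : ℝ => f (x * NormedSpace.exp (t • Lgen i)) y) 0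

/-- derivative in the second variable along generator `i` -/
def Xy (i : Fin 3) (f : Mat3 → Mat3 → ℝ) : Mat3 → Mat3 → ℝ :=
  fun x y => deriv (fun t : ℝ => f x (y * NormedSpace.exp (t • Lgen i))) 0

/-- iterated integrals of the sign of the Chebyshev polynomial: the perfect B-spline chain -/
def fspline (s : ℕ) : ℕ → ℝ → ℝ
  | 0 => fun x => (-1 : ℝ) ^ (s - 1) * Real.sign ((Polynomial.Chebyshev.U ℝ ((s : ℤ) - 1)).eval x)
  | (k + 1) => fun x => ∫ t in (-1 : ℝ)..x, fspline s k t

/-- the scaled perfect B-spline g̃_{s-1} -/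
def gtilde (s : ℕ) (x : ℝ) : ℝ := fspline s (s - 1) (2 * x)

/-- discrete norm ‖g̃‖_{1,N} -/
def gnorm (s N : ℕ) : ℝ :=
  ∑ k ∈ Finset.Icc (-(N : ℤ)) (N : ℤ), gtilde s ((k : ℝ) / (2 * ((N : ℝ) + 1)))

/-- the trigonometric kernel σ̃_N (real-valued) -/
def sigmaT (s N : ℕ) (t : ℝ) : ℝ :=
  ((1 / (gnorm s N : ℂ)) *
      ∑ k ∈ Finset.Icc (-(N : ℤ)) (N : ℤ),
        (gtilde s ((k : ℝ) / (2 * ((N : ℝ) + 1))) : ℂ) * Complex.exp ((k : ℂ) * t * Complex.I)).re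

/-- the zonal kernel σ_N on SO(3) -/
def sigmaK (s N : ℕ) (x y : Mat3) : ℝ := sigmaT s N (rotAngle (y⁻¹ * x))

/-- rotation axis components -/
def axisComp : Fin 3 → Mat3 → ℝ :=
  ![fun x => (x 2 1 - x 1 2) / (2 * Real.sin (rotAngle x)),
    fun x => (x 0 2 - x 2 0) / (2 * Real.sin (rotAngle x)),
    fun x => (x 1 0 - x 0 1) / (2 * Real.sin (rotAngle x))]

/-- Levi-Civita symbol on `Fin 3` -/
def eps3 (a b c : Fin 3) : ℝ :=
  if (a, b, c) = (0, 1, 2) ∨ (a, b, c) = (1, 2, 0) ∨ (a, b, c) = (2, 0, 1) then 1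
  else if (a, b, c) = (2, 1, 0) ∨ (a, b, c) = (1, 0, 2) ∨ (a, b, c) = (0, 2, 1) then -1
  else 0

/-- constants c_{l,s} -/
def cConst : ℕ → ℕ → ℝ
  | 0, s => 1.02 * (Nat.factorial (s - 1)) * 2 ^ s * s
  | 1, s => 1.02 * (Nat.factorial (s - 1)) * 2 ^ s * (2 * s)
  | 2, s => 1.02 * (Nat.factorial (s - 1)) * 2 ^ s * (4 * s + 1)
  | _, s => 1.02 * (Nat.factorial (s - 1)) * 2 ^ s * (9 * s - 2)

/-- ζ(m) for natural m -/
def zetaNat (m : ℕ) : ℝ := ∑' n : ℕ, (1 : ℝ) / ((n : ℝ) + 1) ^ m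

/-- constants C_{i,s} = 124 c_{i,s} ζ(s-2) -/
def CConst (i s : ℕ) : ℝ := 124 * cConst i s * zetaNat (s - 2)

end

open scoped Real

/-!
By Poisson summation the trigonometric kernel and its derivatives at `t` are sums, over the shifts
`t + 2πm`, of Fourier transforms of the perfect spline at `(N + 1)(t + 2πm)`. The alternating sums
over the knots kill the low moments of the spline, so its iterated integrals vanish at `1`; hence
integrating by parts leaves no boundary terms and the Fourier transform has decay of order `s`.
The discrete norm is bounded below by the term `m = 0`, the integral of the spline.

The trigonometric kernel is a polynomial `P` in `cos t`, so the kernel on `SO(3)` is `P` in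
`c = cos ω = (tr r - 1) / 2`, where `r = y⁻¹ x`, and is smooth even where `ω` is not. Write
`r = W + c + K` with `W = (1 - c) a aᵀ` and `K` the skew part of `r`. Multiplying the mixed
derivative by `1 - c` expresses it through `σ̃''(ω)` times `W` and `P'(c)` times entries of size
`1 + c` or `sin ω`. As `P'(c) sin ω = -σ̃'(ω)` and `(1 + cos ω) ω ≤ 2 sin ω`, the factor `1 + c`
makes up for the singularity of `P'(c)` at half turns, and the entries of `W` and `K` are bounded
by the identities `W² = (1 - c) W` and `K² = (1 + c) (W - (1 - c))`.
-/

open MeasureTheory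

section Spline

variable {s : ℕ}

/-- The breakpoints `-cos (jπ/s)` of the perfect spline: `splineKnot s 1, …, splineKnot s (s - 1)`
are the zeros of `U_{s-1}` in increasing order, `splineKnot s 0 = -1` and `splineKnot s s = 1`. -/
noncomputable def splineKnot (s j : ℕ) : ℝ := -Real.cos (j * π / s)

lemma splineKnot_zero (s : ℕ) : splineKnot s 0 = -1 := by simp [splineKnot]

lemma splineKnot_self (hs : 0 < s) : splineKnot s s = 1 := by
  have : (s : ℝ) ≠ 0 := by positivity
  simp [splineKnot, mul_div_cancel_left₀ _ this]

lemma splineKnot_mem_Icc (s j : ℕ) : splineKnot s j ∈ Set.Icc (-1 : ℝ) 1 :=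
  ⟨neg_le_neg (Real.cos_le_one _), neg_le.1 (Real.neg_one_le_cos _)⟩

lemma nat_mul_pi_div_mem_Icc {j : ℕ} (hj : j ≤ s) : j * π / s ∈ Set.Icc 0 π := by
  refine ⟨by positivity, div_le_of_le_mul₀ (by positivity) Real.pi_pos.le ?_⟩
  rw [mul_comm]
  gcongr

lemma splineKnot_le_succ {j : ℕ} (hj : j < s) : splineKnot s j ≤ splineKnot s (j + 1) := by
  refine neg_le_neg (Real.cos_le_cos_of_nonneg_of_le_pi (by positivity)
    (nat_mul_pi_div_mem_Icc (by omega)).2 ?_)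
  gcongr
  omega

lemma splineKnot_reflect (hs : 0 < s) {j : ℕ} (hj : j ≤ 2 * s) :
    splineKnot s (2 * s - j) = splineKnot s j := by
  have hs' : (s : ℝ) ≠ 0 := by positivity
  have : ((2 * s - j : ℕ) : ℝ) * π / s = 2 * π - j * π / s := by
    rw [Nat.cast_sub hj]
    push_cast
    field_simp
  rw [splineKnot, this, Real.cos_two_pi_sub, splineKnot]

lemma exists_mem_Icc_splineKnot {x : ℝ} {n : ℕ} (h0 : splineKnot s 0 ≤ x)
    (hn : x ≤ splineKnot s (n + 1)) :
    ∃ j ≤ n, x ∈ Set.Icc (splineKnot s j) (splineKnot s (j + 1)) := by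
  induction n with
  | zero => exact ⟨0, le_rfl, h0, hn⟩
  | succ n ih =>
    rcases le_total x (splineKnot s (n + 1)) with h | h
    · obtain ⟨j, hj, hx⟩ := ih h
      exact ⟨j, by omega, hx⟩
    · exact ⟨n + 1, le_rfl, h, hn⟩

lemma sign_neg_one_pow_mul (n : ℕ) {p : ℝ} (hp : 0 < p) :
    Real.sign ((-1) ^ n * p) = (-1) ^ n := by
  rcases neg_one_pow_eq_or ℝ n with h | h <;> simp [h, Real.sign_neg, Real.sign_of_pos hp]

lemma fspline_zero_neg_cos (hs : 0 < s) {j : ℕ} {φ : ℝ} (hφ : φ ∈ Set.Ioo 0 π)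
    (hj : s * φ ∈ Set.Ioo (j * π) ((j + 1) * π)) : fspline s 0 (-Real.cos φ) = (-1) ^ j := by
  obtain ⟨m, rfl⟩ : ∃ m, s = m + 1 := ⟨s - 1, by omega⟩
  have hsin : 0 < Real.sin φ := Real.sin_pos_of_mem_Ioo hφ
  have hpos : 0 < Real.sin ((m + 1 : ℕ) * φ - j * π) :=
    Real.sin_pos_of_pos_of_lt_pi (by linarith [hj.1]) (by linarith [hj.2])
  have hj2 : (-1 : ℝ) ^ j * (-1) ^ j = 1 := by rw [← mul_pow]; norm_num
  have hU : (Polynomial.Chebyshev.U ℝ m).eval (-Real.cos φ) =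
      (-1) ^ (m + j) * (Real.sin ((m + 1 : ℕ) * φ - j * π) / Real.sin φ) := by
    rw [← Real.cos_pi_sub, ← mul_div_assoc, eq_div_iff hsin.ne', ← Real.sin_pi_sub φ,
      Polynomial.Chebyshev.U_real_cos, Real.sin_sub_nat_mul_pi, mul_sub]
    have := Real.sin_nat_mul_pi_sub ((m + 1 : ℕ) * φ) (m + 1)
    push_cast at this ⊢
    rw [this]
    linear_combination -(-1) ^ m * Real.sin ((m + 1) * φ) * hj2
  have hcast : ((m + 1 : ℕ) : ℤ) - 1 = m := by push_cast; ring
  simp only [fspline, hcast, Nat.add_sub_cancel, hU,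
    sign_neg_one_pow_mul _ (div_pos hpos hsin)]
  rw [pow_add, ← mul_assoc, ← mul_pow]
  norm_num

lemma fspline_zero_eq {j : ℕ} (hj : j < s) {x : ℝ}
    (hx : x ∈ Set.Ioo (splineKnot s j) (splineKnot s (j + 1))) :
    fspline s 0 x = (-1) ^ j := by
  have hs0 : (0 : ℝ) < s := by exact_mod_cast (Nat.zero_le j).trans_lt hj
  have hx1 : -1 < x := (splineKnot_mem_Icc s j).1.trans_lt hx.1
  have hx2 : x < 1 := hx.2.trans_le (splineKnot_mem_Icc s _).2
  set φ := Real.arccos (-x)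
  have hxφ : x = -Real.cos φ := by rw [Real.cos_arccos (by linarith) (by linarith), neg_neg]
  have hφ0 : 0 < φ := Real.arccos_pos.2 (by linarith)
  have hφπ : φ < π := (Real.arccos_le_pi _).lt_of_ne fun h => by
    rw [Real.arccos_eq_pi] at h
    linarith
  have hφmem : φ ∈ Set.Icc 0 π := ⟨hφ0.le, hφπ.le⟩
  have hl : j * π / s < φ := (Real.strictAntiOn_cos.lt_iff_gt hφmem
    (nat_mul_pi_div_mem_Icc hj.le)).1 (by simpa [splineKnot, hxφ] using hx.1)
  have hu : φ < (j + 1 : ℕ) * π / s := (Real.strictAntiOn_cos.lt_iff_gt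
    (nat_mul_pi_div_mem_Icc hj) hφmem).1 (by simpa [splineKnot, hxφ] using hx.2)
  rw [div_lt_iff₀' hs0] at hl
  rw [lt_div_iff₀' hs0] at hu
  push_cast at hu
  rw [hxφ]
  exact fspline_zero_neg_cos (by exact_mod_cast hs0) ⟨hφ0, hφπ⟩ ⟨hl, hu⟩

lemma abs_fspline_zero_le (s : ℕ) (x : ℝ) : |fspline s 0 x| ≤ 1 := by
  simp only [fspline, abs_mul, abs_pow, abs_neg, abs_one, one_pow, one_mul]
  rcases Real.sign_apply_eq
    ((Polynomial.Chebyshev.U ℝ ((s : ℤ) - 1)).eval x) with h | h | h <;> simp [h]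

lemma measurable_fspline_zero (s : ℕ) : Measurable (fspline s 0) := by
  have h : Measurable Real.sign := by
    unfold Real.sign
    exact Measurable.ite measurableSet_Iio measurable_const
      (Measurable.ite measurableSet_Ioi measurable_const measurable_const)
  exact (h.comp (Polynomial.continuous _).measurable).const_mul _

lemma intervalIntegrable_fspline_zero (s : ℕ) (a b : ℝ) :
    IntervalIntegrable (fspline s 0) volume a b := by
  rw [intervalIntegrable_iff]
  exact Measure.integrableOn_of_bounded (M := 1) (by simp)
    (measurable_fspline_zero s).aestronglyMeasurable
    (Filter.Eventually.of_forall fun x => by simpa using abs_fspline_zero_le s x)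

lemma continuous_fspline_succ (s k : ℕ) : Continuous (fspline s (k + 1)) := by
  induction k with
  | zero => exact intervalIntegral.continuous_primitive (intervalIntegrable_fspline_zero s) _
  | succ k ih =>
    exact intervalIntegral.continuous_primitive (fun a b => ih.intervalIntegrable a b) _

lemma intervalIntegrable_fspline (s k : ℕ) (a b : ℝ) :
    IntervalIntegrable (fspline s k) volume a b := by
  cases k with
  | zero => exact intervalIntegrable_fspline_zero s a b
  | succ k => exact (continuous_fspline_succ s k).intervalIntegrable a b

lemma intervalIntegrable_ofReal_fspline (s k : ℕ) (a b : ℝ) :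
    IntervalIntegrable (fun x => (fspline s k x : ℂ)) volume a b :=
  ⟨(intervalIntegrable_fspline s k a b).1.ofReal, (intervalIntegrable_fspline s k a b).2.ofReal⟩

lemma fspline_succ_neg_one (s k : ℕ) : fspline s (k + 1) (-1) = 0 := by
  simp [fspline]

lemma integral_mul_fspline_zero (hs : 0 < s) {ψ : ℝ → ℂ} (hψ : Continuous ψ) :
    ∫ x in (-1 : ℝ)..1, ψ x * fspline s 0 x =
      ∑ j ∈ Finset.range s, (-1) ^ j * ∫ x in splineKnot s j..splineKnot s (j + 1), ψ x := by
  have hint (a b : ℝ) : IntervalIntegrable (fun x => ψ x * (fspline s 0 x : ℂ)) volume a b :=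
    (intervalIntegrable_ofReal_fspline s 0 a b).continuousOn_mul hψ.continuousOn
  rw [← splineKnot_zero s, ← splineKnot_self hs,
    ← intervalIntegral.sum_integral_adjacent_intervals fun _ _ => hint _ _]
  refine Finset.sum_congr rfl fun j hj => ?_
  rw [← intervalIntegral.integral_const_mul]
  refine intervalIntegral.integral_congr_Ioo_of_le
    (splineKnot_le_succ (Finset.mem_range.1 hj)) fun x hx => ?_
  simp only [fspline_zero_eq (Finset.mem_range.1 hj) hx]
  push_cast
  ring

lemma hasDerivAt_fspline_succ_succ (s k : ℕ) (x : ℝ) :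
    HasDerivAt (fspline s (k + 2)) (fspline s (k + 1) x) x :=
  (continuous_fspline_succ s k).integral_hasStrictDerivAt _ _ |>.hasDerivAt

lemma fspline_one_eq_add {j : ℕ} (hj : j < s) {x : ℝ}
    (hx : x ∈ Set.Icc (splineKnot s j) (splineKnot s (j + 1))) :
    fspline s 1 x = fspline s 1 (splineKnot s j) + (-1) ^ j * (x - splineKnot s j) := by
  have h : ∫ t in splineKnot s j..x, fspline s 0 t = ∫ _ in splineKnot s j..x, (-1 : ℝ) ^ j :=
    intervalIntegral.integral_congr_Ioo_of_le hx.1 fun t ht =>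
      fspline_zero_eq hj ⟨ht.1, ht.2.trans_le hx.2⟩
  rw [intervalIntegral.integral_const, smul_eq_mul] at h
  have h2 := intervalIntegral.integral_add_adjacent_intervals
    (intervalIntegrable_fspline_zero s (-1) (splineKnot s j))
    (intervalIntegrable_fspline_zero s (splineKnot s j) x)
  change _ = fspline s 1 x at h2
  rw [← h2, h]
  change fspline s 1 (splineKnot s j) + _ = _
  ring

lemma hasDerivAt_fspline_one {x : ℝ}
    (hx : (Polynomial.Chebyshev.U ℝ ((s : ℤ) - 1)).eval x ≠ 0) :
    HasDerivAt (fspline s 1) (fspline s 0 x) x := by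
  have hsign : ContinuousAt Real.sign ((Polynomial.Chebyshev.U ℝ ((s : ℤ) - 1)).eval x) := by
    rcases hx.lt_or_gt with h | h
    · refine (continuousAt_const (y := (-1 : ℝ))).congr ?_
      filter_upwards [Iio_mem_nhds h] with y hy using (Real.sign_of_neg hy).symm
    · refine (continuousAt_const (y := (1 : ℝ))).congr ?_
      filter_upwards [Ioi_mem_nhds h] with y hy using (Real.sign_of_pos hy).symm
  have hc : ContinuousAt (fspline s 0) x :=
    (ContinuousAt.comp (f := fun x => (Polynomial.Chebyshev.U ℝ ((s : ℤ) - 1)).eval x) hsign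
      (Polynomial.continuous _).continuousAt).const_mul _
  exact intervalIntegral.integral_hasDerivAt_right (intervalIntegrable_fspline_zero s _ _)
    (measurable_fspline_zero s).stronglyMeasurable.stronglyMeasurableAtFilter hc

lemma hasDerivAt_fspline_succ {k : ℕ} {x : ℝ}
    (hx : (Polynomial.Chebyshev.U ℝ ((s : ℤ) - 1)).eval x ≠ 0) :
    HasDerivAt (fspline s (k + 1)) (fspline s k x) x := by
  cases k with
  | zero => exact hasDerivAt_fspline_one hx
  | succ k => exact hasDerivAt_fspline_succ_succ s k x

lemma integral_mul_fspline_succ (hs : 0 < s) (k : ℕ) {φ φ' : ℝ → ℂ}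
    (hφ : ∀ x, HasDerivAt φ (φ' x) x) (hφ' : Continuous φ') :
    ∫ x in (-1 : ℝ)..1, φ' x * fspline s (k + 1) x =
      φ 1 * fspline s (k + 1) 1 - ∫ x in (-1 : ℝ)..1, φ x * fspline s k x := by
  have hφc : Continuous φ := continuous_iff_continuousAt.2 fun x => (hφ x).continuousAt
  have hf : Continuous fun x => (fspline s (k + 1) x : ℂ) :=
    Complex.continuous_ofReal.comp (continuous_fspline_succ s k)
  have hi1 : IntervalIntegrable (fun x => φ' x * (fspline s (k + 1) x : ℂ)) volume (-1) 1 :=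
    (hφ'.mul hf).intervalIntegrable _ _
  have hi2 : IntervalIntegrable (fun x => φ x * (fspline s k x : ℂ)) volume (-1) 1 :=
    (intervalIntegrable_ofReal_fspline s k _ _).continuousOn_mul hφc.continuousOn
  have hftc := integral_eq_of_hasDerivAt_off_countable
    (fun x => φ x * (fspline s (k + 1) x : ℂ))
    (fun x => φ' x * (fspline s (k + 1) x : ℂ) + φ x * (fspline s k x : ℂ))
    (a := -1) (b := 1)
    (Polynomial.finite_setOfPred_isRoot
      (Polynomial.Chebyshev.U_ne_zero ℝ ((s : ℤ) - 1) (by omega))).countable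
    (hφc.mul hf).continuousOn
    (fun x hx => (hφ x).mul (hasDerivAt_fspline_succ hx.2).ofReal_comp)
    (hi1.add hi2)
  rw [intervalIntegral.integral_add hi1 hi2, fspline_succ_neg_one] at hftc
  rw [eq_sub_iff_add_eq, hftc]
  simp

/-- The sums `∑ (-1)^j x_j^m cos (lθ_j)` over a full period of the angles `θ_j = jπ/s` of the knots
`x_j = -cos θ_j`. They evaluate the moments of the perfect spline; the frequency `l` is there for
the induction on `m`. -/
noncomputable def alternatingKnotSum (s m : ℕ) (l : ℤ) : ℝ :=
  ∑ j ∈ Finset.range (2 * s), (-1) ^ j * splineKnot s j ^ m * Real.cos (l * (j * π / s))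

lemma alternatingKnotSum_neg (s m : ℕ) (l : ℤ) :
    alternatingKnotSum s m (-l) = alternatingKnotSum s m l := by
  simp [alternatingKnotSum]

lemma alternatingKnotSum_succ (s m : ℕ) (l : ℤ) :
    alternatingKnotSum s (m + 1) l =
      -(alternatingKnotSum s m (l + 1) + alternatingKnotSum s m (l - 1)) / 2 := by
  simp only [alternatingKnotSum, ← Finset.sum_add_distrib, ← Finset.sum_neg_distrib,
    Finset.sum_div]
  refine Finset.sum_congr rfl fun j _ => ?_
  push_cast
  rw [add_mul, sub_mul, one_mul, Real.cos_add, Real.cos_sub, pow_succ]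
  simp only [splineKnot]
  ring

lemma two_mul_cos_mul_sum_range_neg_one_pow_mul_cos (β : ℝ) (n : ℕ) :
    2 * Real.cos β * ∑ j ∈ Finset.range n, (-1) ^ j * Real.cos (2 * j * β) =
      Real.cos β - (-1) ^ n * Real.cos (2 * n * β - β) := by
  induction n with
  | zero => simp
  | succ n ih =>
    have harg : 2 * ((n + 1 : ℕ) : ℝ) * β - β = 2 * n * β + β := by
      push_cast
      ring
    rw [Finset.sum_range_succ, mul_add, ih, harg, Real.cos_add, Real.cos_sub, pow_succ]
    ring

lemma alternatingKnotSum_zero_eq_zero {l : ℤ} (hl : |l| < s) : alternatingKnotSum s 0 l = 0 := by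
  have hs : (0 : ℝ) < s := by exact_mod_cast (abs_nonneg l).trans_lt hl
  have hl' : |(l : ℝ)| < s := by exact_mod_cast hl
  set β : ℝ := l * (π / (2 * s)) with hβ
  have hcos : Real.cos β ≠ 0 := by
    refine (Real.cos_pos_of_mem_Ioo (abs_lt.1 ?_)).ne'
    rw [hβ, abs_mul, abs_of_pos (by positivity : 0 < π / (2 * s))]
    calc |(l : ℝ)| * (π / (2 * s)) < s * (π / (2 * s)) := by gcongr
      _ = π / 2 := by field_simp
  have hperiod : Real.cos (2 * (2 * s : ℕ) * β - β) = Real.cos β := by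
    have : 2 * ((2 * s : ℕ) : ℝ) * β - β = -β + l * (2 * π) := by
      rw [hβ]
      push_cast
      field_simp
      ring
    rw [this, Real.cos_add_int_mul_two_pi, Real.cos_neg]
  have hsum := two_mul_cos_mul_sum_range_neg_one_pow_mul_cos β (2 * s)
  rw [hperiod, (even_two_mul s).neg_one_pow, one_mul, sub_self, mul_eq_zero] at hsum
  rw [← hsum.resolve_left (mul_ne_zero two_ne_zero hcos), alternatingKnotSum]
  refine Finset.sum_congr rfl fun j _ => ?_
  rw [pow_zero, mul_one, hβ]
  congr 2
  field_simp

lemma alternatingKnotSum_eq_zero (m : ℕ) {l : ℤ} (hl : |l| + m < s) :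
    alternatingKnotSum s m l = 0 := by
  induction m generalizing l with
  | zero => exact alternatingKnotSum_zero_eq_zero (by simpa using hl)
  | succ m ih =>
    push_cast at hl
    have hsub := abs_sub l 1
    have hadd := abs_add_le l 1
    rw [abs_one] at hsub hadd
    rw [alternatingKnotSum_succ, ih (by omega), ih (by omega)]
    simp

lemma alternatingKnotSum_zero_self (hs : 0 < s) : alternatingKnotSum s 0 s = 2 * s := by
  have hterm (j : ℕ) :
      (-1 : ℝ) ^ j * splineKnot s j ^ 0 * Real.cos ((s : ℤ) * (j * π / s)) = 1 := by
    have : ((s : ℤ) : ℝ) * (j * π / s) = j * π := by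
      push_cast
      field_simp
    rw [this, Real.cos_nat_mul_pi, pow_zero, mul_one, ← mul_pow]
    norm_num
  simp only [alternatingKnotSum, hterm]
  simp

lemma alternatingKnotSum_sub {m : ℕ} (hm : m < s) :
    alternatingKnotSum s m ((s : ℤ) - m) = (-1 / 2) ^ m * (2 * s) := by
  induction m with
  | zero => simpa using alternatingKnotSum_zero_self (by omega)
  | succ m ih =>
    have hfreq : ((s : ℤ) - (m + 1 : ℕ)) + 1 = s - m := by
      push_cast
      ring
    have hvanish : alternatingKnotSum s m ((s : ℤ) - (m + 1 : ℕ) - 1) = 0 := by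
      apply alternatingKnotSum_eq_zero
      rw [abs_of_nonneg (by push_cast; omega)]
      push_cast
      omega
    rw [alternatingKnotSum_succ, hfreq, ih (by omega), hvanish, pow_succ]
    ring

lemma alternatingKnotSum_self_zero (hs : 0 < s) :
    alternatingKnotSum s s 0 = (-1 / 2) ^ s * (4 * s) := by
  obtain ⟨m, rfl⟩ : ∃ m, s = m + 1 := ⟨s - 1, by omega⟩
  have h := alternatingKnotSum_sub (Nat.lt_succ_self m)
  rw [Nat.succ_eq_add_one, Nat.cast_add_one, add_sub_cancel_left] at h
  rw [alternatingKnotSum_succ, zero_add, zero_sub, alternatingKnotSum_neg, h, pow_succ]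
  push_cast
  ring

lemma sum_neg_one_pow_mul_splineKnot_pow_sub (hs : 0 < s) (m : ℕ) :
    ∑ j ∈ Finset.range s, (-1) ^ j * (splineKnot s (j + 1) ^ m - splineKnot s j ^ m) =
      -alternatingKnotSum s m 0 := by
  simp only [alternatingKnotSum, Int.cast_zero, zero_mul, Real.cos_zero, mul_one]
  rw [two_mul, Finset.sum_range_add, ← Finset.sum_range_reflect (fun x => (-1 : ℝ) ^ (s + x) * _),
    ← Finset.sum_add_distrib, ← Finset.sum_neg_distrib]
  refine Finset.sum_congr rfl fun j hj => ?_
  have hj := Finset.mem_range.1 hj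
  have hreflect : s + (s - 1 - j) = 2 * s - (j + 1) := by omega
  have hsign : (-1 : ℝ) ^ (2 * s - (j + 1)) = -(-1) ^ j := by
    have hcancel : (-1 : ℝ) ^ (2 * s - (j + 1)) * (-1) ^ (j + 1) = 1 := by
      rw [← pow_add, Nat.sub_add_cancel (by omega), pow_mul]
      simp
    rcases neg_one_pow_eq_or ℝ j with h | h <;> rw [pow_succ, h] at hcancel <;> rw [h] <;> linarith
  rw [hreflect, hsign, splineKnot_reflect hs (by omega)]
  ring

lemma integral_pow_mul_fspline_zero (hs : 0 < s) (m : ℕ) :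
    ∫ x in (-1 : ℝ)..1, (x : ℂ) ^ m * fspline s 0 x =
      ((-alternatingKnotSum s (m + 1) 0 / (m + 1) : ℝ) : ℂ) := by
  rw [integral_mul_fspline_zero hs (by fun_prop), ← sum_neg_one_pow_mul_splineKnot_pow_sub hs,
    Finset.sum_div]
  push_cast
  refine Finset.sum_congr rfl fun j _ => ?_
  have hpow (a b : ℝ) :
      ∫ x in a..b, (x : ℂ) ^ m = (((b ^ (m + 1) - a ^ (m + 1)) / (m + 1) : ℝ) : ℂ) := by
    rw [← integral_pow, ← intervalIntegral.integral_ofReal]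
    simp
  rw [hpow]
  push_cast
  ring

lemma integral_pow_mul_fspline_succ (hs : 0 < s) (k m : ℕ) :
    ∫ x in (-1 : ℝ)..1, (x : ℂ) ^ m * fspline s (k + 1) x =
      -((∫ x in (-1 : ℝ)..1, (x : ℂ) ^ (m + 1) * fspline s k x) -
        ∫ x in (-1 : ℝ)..1, (x : ℂ) ^ 0 * fspline s k x) / (m + 1) := by
  have hm : ((m : ℂ) + 1) ≠ 0 := by exact_mod_cast Nat.succ_ne_zero m
  have h := integral_mul_fspline_succ hs k
    (φ := fun x : ℝ => ((x : ℂ) ^ (m + 1) - 1) / (m + 1)) (φ' := fun x : ℝ => (x : ℂ) ^ m)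
    (fun x => by
      have := ((((hasDerivAt_id x).ofReal_comp).pow (m + 1)).sub_const 1).div_const
        ((m : ℂ) + 1)
      refine this.congr_deriv ?_
      push_cast
      field_simp
      simp)
    (by fun_prop)
  rw [h]
  have hi : ∀ n : ℕ, IntervalIntegrable (fun x : ℝ => (x : ℂ) ^ n * (fspline s k x : ℂ))
      volume (-1) 1 := fun n =>
    (intervalIntegrable_ofReal_fspline s k _ _).continuousOn_mul (by fun_prop)
  rw [← intervalIntegral.integral_sub (hi _) (hi _), neg_div,
    ← intervalIntegral.integral_div]
  simp only [Complex.ofReal_one, one_pow, sub_self, zero_div, zero_mul, zero_sub]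
  congr 2
  ext x
  ring

lemma integral_pow_mul_fspline_eq_zero (k m : ℕ) (hkm : k + m + 2 ≤ s) :
    ∫ x in (-1 : ℝ)..1, (x : ℂ) ^ m * fspline s k x = 0 := by
  have hs : 0 < s := by omega
  induction k generalizing m with
  | zero =>
    rw [integral_pow_mul_fspline_zero hs, alternatingKnotSum_eq_zero _ (by simp; omega)]
    simp
  | succ k ih =>
    rw [integral_pow_mul_fspline_succ hs, ih _ (by omega), ih _ (by omega)]
    simp

lemma fspline_succ_one_eq_zero {k : ℕ} (hk : k + 2 ≤ s) : fspline s (k + 1) 1 = 0 := by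
  have h := integral_pow_mul_fspline_eq_zero k 0 hk
  simp only [pow_zero, one_mul] at h
  rwa [intervalIntegral.integral_ofReal, Complex.ofReal_eq_zero] at h

lemma integral_pow_mul_fspline_of_add_add_one_eq (k m : ℕ) (hkm : k + m + 1 = s) :
    ∫ x in (-1 : ℝ)..1, (x : ℂ) ^ m * fspline s k x =
      (-1) ^ (k + 1) * m.factorial / (s - 1).factorial * (4 * (-1 / 2) ^ s) := by
  have hs : 0 < s := by omega
  induction k generalizing m with
  | zero =>
    obtain rfl : s = m + 1 := by omega
    have hm : ((m : ℂ) + 1) ≠ 0 := by exact_mod_cast Nat.succ_ne_zero m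
    have hf : (m.factorial : ℂ) ≠ 0 := by exact_mod_cast m.factorial_ne_zero
    rw [integral_pow_mul_fspline_zero hs, alternatingKnotSum_self_zero hs]
    push_cast
    field_simp
  | succ k ih =>
    have hm : ((m : ℂ) + 1) ≠ 0 := by exact_mod_cast Nat.succ_ne_zero m
    rw [integral_pow_mul_fspline_succ hs, ih _ (by omega),
      integral_pow_mul_fspline_eq_zero k 0 (by omega), Nat.factorial_succ]
    push_cast
    field_simp
    ring

lemma integral_fspline_sub_one (hs : 0 < s) :
    ∫ x in (-1 : ℝ)..1, (fspline s (s - 1) x : ℂ) =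
      ((4 / (2 ^ s * (s - 1).factorial) : ℝ) : ℂ) := by
  have h := integral_pow_mul_fspline_of_add_add_one_eq (s := s) (s - 1) 0 (by omega)
  simp only [pow_zero, one_mul] at h
  have hsign : (-1 : ℂ) ^ s * (-1 / 2) ^ s = 1 / 2 ^ s := by
    rw [← mul_pow, ← one_div_pow]
    norm_num
  rw [h, Nat.sub_add_cancel hs, Nat.factorial_zero]
  push_cast
  linear_combination 4 / ((s - 1).factorial : ℂ) * hsign

lemma fspline_one_splineKnot (hs : 2 ≤ s) {j : ℕ} (hj : j ≤ s) :
    fspline s 1 (splineKnot s j) =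
      -((-1) ^ j * (Real.tan (π / (2 * s)) * Real.sin (j * π / s))) := by
  have hs2 : (2 : ℝ) ≤ s := by exact_mod_cast hs
  set α : ℝ := π / (2 * s) with hα
  have hα0 : 0 < α := by positivity
  have hα1 : α < π / 2 := div_lt_div_of_pos_left Real.pi_pos two_pos (by linarith)
  have hcos : Real.cos α ≠ 0 := (Real.cos_pos_of_mem_Ioo ⟨by linarith, hα1⟩).ne'
  induction j with
  | zero => simp [splineKnot_zero, fspline_succ_neg_one]
  | succ j ih =>
    have hle := splineKnot_le_succ (s := s) (j := j) (by omega)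
    rw [fspline_one_eq_add (by omega) (Set.right_mem_Icc.2 hle), ih (by omega)]
    simp only [splineKnot]
    have hleft : (j : ℝ) * π / s = (2 * j * α + α) - α := by
      rw [hα]
      field_simp
      ring
    have hright : ((j + 1 : ℕ) : ℝ) * π / s = (2 * j * α + α) + α := by
      rw [hα]
      push_cast
      field_simp
      ring
    rw [hleft, hright]
    generalize 2 * (j : ℝ) * α + α = γ
    rw [Real.cos_add _ α, Real.cos_sub _ α, Real.sin_add _ α, Real.sin_sub _ α,
      Real.tan_eq_sin_div_cos, pow_succ]
    field_simp
    ring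

lemma convexOn_tan : ConvexOn ℝ (Set.Ico 0 (π / 2)) Real.tan := by
  have hcos {x : ℝ} (hx : x ∈ Set.Ico 0 (π / 2)) : 0 < Real.cos x :=
    Real.cos_pos_of_mem_Ioo ⟨by linarith [hx.1, Real.pi_pos], hx.2⟩
  have hd {x : ℝ} (hx : x ∈ Set.Ico 0 (π / 2)) : HasDerivAt Real.tan (1 / Real.cos x ^ 2) x :=
    Real.hasDerivAt_tan (hcos hx).ne'
  refine MonotoneOn.convexOn_of_deriv (convex_Ico _ _)
    (fun x hx => (hd hx).continuousAt.continuousWithinAt)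
    (fun x hx => (hd (interior_subset hx)).differentiableAt.differentiableWithinAt)
    fun x hx y hy hxy => ?_
  have hx := interior_subset hx
  have hy := interior_subset hy
  rw [(hd hx).deriv, (hd hy).deriv]
  have := hcos hy
  have := Real.cos_le_cos_of_nonneg_of_le_pi hx.1 (by linarith [hy.2, Real.pi_pos]) hxy
  gcongr

lemma tan_pi_div_two_mul_le (hs : 2 ≤ s) : Real.tan (π / (2 * s)) ≤ 2 / s := by
  have hs2 : (2 : ℝ) ≤ s := by exact_mod_cast hs
  have hpi := Real.pi_pos
  have hzero : (0 : ℝ) ∈ Set.Ico 0 (π / 2) := ⟨le_rfl, by positivity⟩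
  have hquarter : π / 4 ∈ Set.Ico 0 (π / 2) := ⟨by positivity, by linarith⟩
  have hle : 2 / (s : ℝ) ≤ 1 := (div_le_one (by positivity)).2 hs2
  have h := convexOn_tan.2 hzero hquarter (sub_nonneg.2 hle) (by positivity)
    (sub_add_cancel 1 (2 / (s : ℝ)))
  have hpoint : 2 / (s : ℝ) * (π / 4) = π / (2 * s) := by
    field_simp
    norm_num
  simpa [hpoint] using h

lemma abs_fspline_one_splineKnot_le (hs : 2 ≤ s) {j : ℕ} (hj : j ≤ s) :
    |fspline s 1 (splineKnot s j)| ≤ 2 / s := by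
  have hs2 : (2 : ℝ) ≤ s := by exact_mod_cast hs
  have htan : 0 ≤ Real.tan (π / (2 * s)) :=
    Real.tan_nonneg_of_nonneg_of_le_pi_div_two (by positivity)
      (div_le_div_of_nonneg_left Real.pi_pos.le two_pos (by linarith))
  rw [fspline_one_splineKnot hs hj, abs_neg, abs_mul, abs_pow, abs_neg, abs_one, one_pow, one_mul,
    abs_mul, abs_of_nonneg htan]
  exact (mul_le_of_le_one_right htan (Real.abs_sin_le_one _)).trans (tan_pi_div_two_mul_le hs)

lemma abs_fspline_one_le (hs : 2 ≤ s) {x : ℝ} (hx : x ∈ Set.Icc (-1 : ℝ) 1) :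
    |fspline s 1 x| ≤ 2 / s := by
  obtain ⟨m, rfl⟩ : ∃ m, s = m + 1 := ⟨s - 1, by omega⟩
  rw [← splineKnot_zero (m + 1), ← splineKnot_self (by omega : 0 < m + 1)] at hx
  obtain ⟨j, hj, hxj⟩ := exists_mem_Icc_splineKnot hx.1 hx.2
  have hl := abs_le.1 (abs_fspline_one_splineKnot_le hs (j := j) (by omega))
  have hr := abs_le.1 (abs_fspline_one_splineKnot_le hs (j := j + 1) (by omega))
  have hxl := fspline_one_eq_add (by omega) hxj
  have hrl := fspline_one_eq_add (s := m + 1) (j := j) (by omega)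
    (Set.right_mem_Icc.2 (hxj.1.trans hxj.2))
  obtain ⟨h1, h2⟩ := hxj
  rw [abs_le]
  rcases neg_one_pow_eq_or ℝ j with h | h <;> rw [h] at hxl hrl <;> constructor <;> linarith

end Spline

section SplineFourier

variable {s : ℕ} {ξ : ℝ}

/-- The Fourier transform over `[-1, 1]` of `x ^ l` times the `k`-th iterated integral
`fspline s k` of the sign function. -/
noncomputable def splineFourier (s k l : ℕ) (ξ : ℝ) : ℂ :=
  ∫ x in (-1 : ℝ)..1, (x : ℂ) ^ l * Complex.exp (ξ * x * Complex.I) * fspline s k x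

lemma norm_exp_mul_mul_I (ξ x : ℝ) : ‖Complex.exp (ξ * x * Complex.I)‖ = 1 := by
  rw [← Complex.ofReal_mul, Complex.norm_exp_ofReal_mul_I]

lemma hasDerivAt_exp_mul_mul_I (ξ x : ℝ) :
    HasDerivAt (fun x : ℝ => Complex.exp (ξ * x * Complex.I))
      (ξ * Complex.I * Complex.exp (ξ * x * Complex.I)) x := by
  have h : HasDerivAt (fun x : ℝ => (ξ : ℂ) * x * Complex.I) (ξ * 1 * Complex.I) x :=
    (((hasDerivAt_id x).ofReal_comp).const_mul (ξ : ℂ)).mul_const Complex.I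
  exact h.cexp.congr_deriv (by ring)

lemma hasDerivAt_pow_mul_exp_mul_mul_I (l : ℕ) (ξ x : ℝ) :
    HasDerivAt (fun x : ℝ => (x : ℂ) ^ l * Complex.exp (ξ * x * Complex.I))
      (l * ((x : ℂ) ^ (l - 1) * Complex.exp (ξ * x * Complex.I)) +
        ξ * Complex.I * ((x : ℂ) ^ l * Complex.exp (ξ * x * Complex.I))) x := by
  have hpow : HasDerivAt (fun x : ℝ => (x : ℂ) ^ l) (l * (x : ℂ) ^ (l - 1)) x :=
    (((hasDerivAt_id x).ofReal_comp).pow l).congr_deriv (by simp)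
  exact (hpow.mul (hasDerivAt_exp_mul_mul_I ξ x)).congr_deriv (by ring)

lemma intervalIntegrable_pow_mul_exp_mul_fspline (s k l : ℕ) (ξ a b : ℝ) :
    IntervalIntegrable
      (fun x : ℝ => (x : ℂ) ^ l * Complex.exp (ξ * x * Complex.I) * (fspline s k x : ℂ))
      volume a b :=
  (intervalIntegrable_ofReal_fspline s k a b).continuousOn_mul (by fun_prop)

lemma splineFourier_succ {k : ℕ} (hk : k + 2 ≤ s) (l : ℕ) (hξ : ξ ≠ 0) :
    splineFourier s (k + 1) l ξ = Complex.I / ξ *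
      (splineFourier s k l ξ + l * splineFourier s (k + 1) (l - 1) ξ) := by
  have hparts := integral_mul_fspline_succ (s := s) (by omega) k
    (hasDerivAt_pow_mul_exp_mul_mul_I l ξ) (by fun_prop)
  have hderiv : ∫ x in (-1 : ℝ)..1, (l * ((x : ℂ) ^ (l - 1) * Complex.exp (ξ * x * Complex.I)) +
      ξ * Complex.I * ((x : ℂ) ^ l * Complex.exp (ξ * x * Complex.I))) * fspline s (k + 1) x =
        l * splineFourier s (k + 1) (l - 1) ξ +
          ξ * Complex.I * splineFourier s (k + 1) l ξ := by
    simp only [splineFourier, add_mul, mul_assoc (l : ℂ), mul_assoc ((ξ : ℂ) * Complex.I)]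
    rw [intervalIntegral.integral_add, intervalIntegral.integral_const_mul,
      intervalIntegral.integral_const_mul]
    all_goals exact (intervalIntegrable_pow_mul_exp_mul_fspline ..).const_mul _
  rw [hderiv, fspline_succ_one_eq_zero hk, Complex.ofReal_zero, mul_zero, zero_sub] at hparts
  have hξ' : (ξ : ℂ) ≠ 0 := Complex.ofReal_ne_zero.2 hξ
  rw [div_mul_eq_mul_div, eq_div_iff hξ']
  change _ = -splineFourier s k l ξ at hparts
  linear_combination -Complex.I * hparts + ξ * splineFourier s (k + 1) l ξ * Complex.I_sq

lemma splineFourier_zero_eq {k : ℕ} (hk : k + 1 ≤ s) (hξ : ξ ≠ 0) :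
    splineFourier s k 0 ξ = (Complex.I / ξ) ^ k * splineFourier s 0 0 ξ := by
  induction k with
  | zero => simp
  | succ k ih =>
    rw [splineFourier_succ (by omega) 0 hξ, ih (by omega), pow_succ]
    push_cast
    ring

lemma splineFourier_one_eq {k : ℕ} (hk : k + 1 ≤ s) (hξ : ξ ≠ 0) :
    splineFourier s k 1 ξ = (Complex.I / ξ) ^ k *
      (splineFourier s 0 1 ξ + k * (Complex.I / ξ * splineFourier s 0 0 ξ)) := by
  induction k with
  | zero => simp
  | succ k ih =>
    rw [splineFourier_succ (by omega) 1 hξ, Nat.sub_self, splineFourier_zero_eq (by omega) hξ,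
      ih (by omega), pow_succ]
    push_cast
    ring

lemma splineFourier_two_eq {k : ℕ} (hk : k + 1 ≤ s) (hξ : ξ ≠ 0) :
    splineFourier s k 2 ξ = (Complex.I / ξ) ^ k * (splineFourier s 0 2 ξ + Complex.I / ξ *
      (2 * k * splineFourier s 0 1 ξ + k * (k + 1) * (Complex.I / ξ * splineFourier s 0 0 ξ))) := by
  induction k with
  | zero => simp
  | succ k ih =>
    rw [splineFourier_succ (by omega) 2 hξ, Nat.add_one_sub_one, splineFourier_one_eq (by omega) hξ,
      ih (by omega), pow_succ]
    push_cast
    ring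

lemma norm_integral_mul_exp_le {φ φ' : ℝ → ℝ} (hφ : ∀ x, HasDerivAt φ (φ' x) x)
    (hφ' : Continuous φ') {a b : ℝ} (hab : a ≤ b) (hξ : ξ ≠ 0) :
    ‖∫ x in a..b, (φ x : ℂ) * Complex.exp (ξ * x * Complex.I)‖ ≤
      (|φ a| + |φ b| + ∫ x in a..b, |φ' x|) / |ξ| := by
  have hparts := intervalIntegral.integral_mul_deriv_eq_deriv_mul (a := a) (b := b)
    (u := fun x => (φ x : ℂ)) (u' := fun x => (φ' x : ℂ))
    (fun x _ => (hφ x).ofReal_comp) (fun x _ => hasDerivAt_exp_mul_mul_I ξ x)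
    ((Complex.continuous_ofReal.comp hφ').intervalIntegrable _ _)
    (Continuous.intervalIntegrable (by fun_prop) _ _)
  simp only [mul_left_comm _ ((ξ : ℂ) * Complex.I)] at hparts
  rw [intervalIntegral.integral_const_mul] at hparts
  have hnorm (r x : ℝ) : ‖(r : ℂ) * Complex.exp (ξ * x * Complex.I)‖ = |r| := by
    rw [norm_mul, norm_exp_mul_mul_I, mul_one, Complex.norm_real, Real.norm_eq_abs]
  have hint : ‖∫ x in a..b, (φ' x : ℂ) * Complex.exp (ξ * x * Complex.I)‖ ≤ ∫ x in a..b, |φ' x| :=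
    (intervalIntegral.norm_integral_le_integral_norm hab).trans_eq (by simp only [hnorm])
  have hξI : ‖(ξ : ℂ) * Complex.I‖ = |ξ| := by simp
  rw [le_div_iff₀' (abs_pos.2 hξ), ← hξI, ← norm_mul, hparts]
  calc _ ≤ |φ b| + |φ a| + ∫ x in a..b, |φ' x| :=
        norm_sub_le_of_le (norm_sub_le_of_le (hnorm _ _).le (hnorm _ _).le) hint
    _ = _ := by ring

lemma norm_integral_mul_exp_mul_fspline_zero_le (hs : 0 < s) {φ φ' : ℝ → ℝ}
    (hφ : ∀ x, HasDerivAt φ (φ' x) x) (hφ' : Continuous φ')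
    (hb : ∀ x ∈ Set.Icc (-1 : ℝ) 1, |φ x| ≤ 1) (hξ : ξ ≠ 0) :
    ‖∫ x in (-1 : ℝ)..1, (φ x : ℂ) * Complex.exp (ξ * x * Complex.I) * fspline s 0 x‖ ≤
      (2 * s + ∫ x in (-1 : ℝ)..1, |φ' x|) / |ξ| := by
  have hcont : Continuous φ := continuous_iff_continuousAt.2 fun x => (hφ x).continuousAt
  have hsum := intervalIntegral.sum_integral_adjacent_intervals (a := splineKnot s) (n := s)
    (μ := volume) (fun _ _ => hφ'.abs.intervalIntegrable _ _)
  rw [splineKnot_zero, splineKnot_self hs] at hsum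
  have hconst : (2 : ℝ) * s = ∑ _j ∈ Finset.range s, (2 : ℝ) := by simp [mul_comm]
  rw [integral_mul_fspline_zero hs (by fun_prop), ← hsum, hconst, ← Finset.sum_add_distrib,
    Finset.sum_div]
  refine norm_sum_le_of_le _ fun j hj => ?_
  rw [norm_mul, norm_pow, norm_neg, norm_one, one_pow, one_mul]
  refine (norm_integral_mul_exp_le hφ hφ' (splineKnot_le_succ (Finset.mem_range.1 hj)) hξ).trans ?_
  gcongr
  linarith [hb _ (splineKnot_mem_Icc s j), hb _ (splineKnot_mem_Icc s (j + 1))]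

lemma integral_abs_neg_one_one : ∫ x in (-1 : ℝ)..1, |x| = 1 := by
  rw [← intervalIntegral.integral_add_adjacent_intervals (b := 0)
    (continuous_abs.intervalIntegrable _ _) (continuous_abs.intervalIntegrable _ _)]
  have hneg : ∫ x in (-1 : ℝ)..0, |x| = ∫ x in (-1 : ℝ)..0, -x :=
    intervalIntegral.integral_congr_Ioo_of_le (by norm_num) fun x hx => abs_of_neg hx.2
  have hpos : ∫ x in (0 : ℝ)..1, |x| = ∫ x in (0 : ℝ)..1, x :=
    intervalIntegral.integral_congr_Ioo_of_le (by norm_num) fun x hx => abs_of_pos hx.1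
  rw [hneg, hpos, intervalIntegral.integral_neg, integral_id, integral_id]
  norm_num

lemma norm_splineFourier_zero_zero_le (hs : 0 < s) (hξ : ξ ≠ 0) :
    ‖splineFourier s 0 0 ξ‖ ≤ 2 * s / |ξ| := by
  have h := norm_integral_mul_exp_mul_fspline_zero_le hs (φ := fun _ => 1) (φ' := fun _ => 0)
    (fun x => hasDerivAt_const x 1) continuous_const (by simp) hξ
  simpa [splineFourier] using h

lemma norm_splineFourier_zero_one_le (hs : 0 < s) (hξ : ξ ≠ 0) :
    ‖splineFourier s 0 1 ξ‖ ≤ (2 * s + 2) / |ξ| := by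
  have h := norm_integral_mul_exp_mul_fspline_zero_le hs hasDerivAt_id continuous_const
    (fun x hx => abs_le.2 hx) hξ
  have hint : ∫ _ in (-1 : ℝ)..1, |(1 : ℝ)| = 2 := by norm_num
  simpa only [hint, splineFourier, pow_one, id] using h

lemma norm_splineFourier_zero_two_le (hs : 0 < s) (hξ : ξ ≠ 0) :
    ‖splineFourier s 0 2 ξ‖ ≤ (2 * s + 2) / |ξ| := by
  have h := norm_integral_mul_exp_mul_fspline_zero_le hs (φ := fun x => x ^ 2)
    (φ' := fun x => 2 * x) (fun x => by simpa using hasDerivAt_pow 2 x) (by fun_prop)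
    (fun x hx => by simpa using abs_le.2 hx) hξ
  have hint : ∫ x in (-1 : ℝ)..1, |2 * x| = 2 := by
    simp only [abs_mul, abs_two, intervalIntegral.integral_const_mul, integral_abs_neg_one_one,
      mul_one]
  simpa only [hint, splineFourier, Complex.ofReal_pow] using h

lemma norm_splineFourier_le {k : ℕ} {C : ℝ} (hC : ∀ x ∈ Set.Icc (-1 : ℝ) 1, |fspline s k x| ≤ C)
    (l : ℕ) (ξ : ℝ) : ‖splineFourier s k l ξ‖ ≤ C * ∫ x in (-1 : ℝ)..1, |x| ^ l := by
  rw [← intervalIntegral.integral_const_mul]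
  refine intervalIntegral.norm_integral_le_of_norm_le (by norm_num)
    (.of_forall fun x hx => ?_) (Continuous.intervalIntegrable (by fun_prop) _ _)
  rw [norm_mul, norm_mul, norm_exp_mul_mul_I, norm_pow, Complex.norm_real, Complex.norm_real,
    mul_one, mul_comm]
  exact mul_le_mul_of_nonneg_right (hC x ⟨hx.1.le, hx.2⟩) (by positivity)

lemma norm_splineFourier_zero_zero_le_two (s : ℕ) (ξ : ℝ) : ‖splineFourier s 0 0 ξ‖ ≤ 2 := by
  have h := norm_splineFourier_le (fun x _ => abs_fspline_zero_le s x) 0 ξ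
  norm_num at h
  exact h

lemma norm_splineFourier_zero_one_le_one (s : ℕ) (ξ : ℝ) : ‖splineFourier s 0 1 ξ‖ ≤ 1 := by
  simpa only [pow_one, integral_abs_neg_one_one, one_mul] using
    norm_splineFourier_le (fun x _ => abs_fspline_zero_le s x) 1 ξ

lemma norm_I_div_mul_splineFourier_zero_zero_le (hs : 2 ≤ s) (hξ : ξ ≠ 0) :
    ‖Complex.I / ξ * splineFourier s 0 0 ξ‖ ≤ 4 / s := by
  have heq := splineFourier_zero_eq (k := 1) hs hξ
  rw [pow_one] at heq
  rw [← heq]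
  refine (norm_splineFourier_le (fun x hx => abs_fspline_one_le hs hx) 0 ξ).trans_eq ?_
  norm_num
  ring

lemma norm_splineFourier_sub_one_one_le (hs : 0 < s) (hξ : ξ ≠ 0) :
    ‖splineFourier s (s - 1) 1 ξ‖ ≤ 4 * s / |ξ| ^ s := by
  obtain ⟨m, rfl⟩ : ∃ m, s = m + 1 := ⟨s - 1, by omega⟩
  have hw : ‖Complex.I / (ξ : ℂ)‖ = 1 / |ξ| := by simp
  rw [Nat.add_sub_cancel, splineFourier_one_eq le_rfl hξ, norm_mul, norm_pow, hw,
    one_div_pow]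
  calc _ ≤ 1 / |ξ| ^ m * ((2 * (m + 1 : ℕ) + 2) / |ξ| + m * (1 / |ξ| * 2)) := by
        gcongr
        refine norm_add_le_of_le (norm_splineFourier_zero_one_le hs hξ) ?_
        rw [norm_mul, norm_mul, Complex.norm_natCast, hw]
        gcongr
        exact norm_splineFourier_zero_zero_le_two _ ξ
    _ = _ := by
        push_cast
        field_simp
        ring

lemma norm_splineFourier_sub_one_two_le (hs : 2 ≤ s) (hξ : ξ ≠ 0) :
    ‖splineFourier s (s - 1) 2 ξ‖ ≤ 8 * s / |ξ| ^ s := by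
  obtain ⟨m, rfl⟩ : ∃ m, s = m + 1 := ⟨s - 1, by omega⟩
  have hw : ‖Complex.I / (ξ : ℂ)‖ = 1 / |ξ| := by simp
  rw [Nat.add_sub_cancel, splineFourier_two_eq le_rfl hξ, norm_mul, norm_pow, hw,
    one_div_pow]
  calc _ ≤ 1 / |ξ| ^ m * ((2 * (m + 1 : ℕ) + 2) / |ξ| +
          1 / |ξ| * (2 * m * 1 + m * (m + 1) * (4 / (m + 1 : ℕ)))) := by
        gcongr
        refine norm_add_le_of_le (norm_splineFourier_zero_two_le (by omega) hξ) ?_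
        rw [norm_mul, hw]
        gcongr
        refine norm_add_le_of_le ?_ ?_
        · rw [norm_mul, norm_mul, Complex.norm_natCast, Complex.norm_ofNat]
          gcongr
          exact norm_splineFourier_zero_one_le_one _ ξ
        · rw [norm_mul, norm_mul, ← Nat.cast_add_one, Complex.norm_natCast, Complex.norm_natCast,
            Nat.cast_add_one]
          gcongr
          exact_mod_cast norm_I_div_mul_splineFourier_zero_zero_le hs hξ
    _ = (8 * (m + 1 : ℕ) - 4) / |ξ| ^ (m + 1) := by
        push_cast
        field_simp
        ring
    _ ≤ _ := by
        gcongr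
        linarith

lemma norm_splineFourier_sub_one_le (hs : 2 ≤ s) {l : ℕ} (hl : l ≤ 2) (hξ : ξ ≠ 0) :
    ‖splineFourier s (s - 1) l ξ‖ ≤ 2 ^ l * (2 * s) / |ξ| ^ s := by
  interval_cases l
  · obtain ⟨m, rfl⟩ : ∃ m, s = m + 1 := ⟨s - 1, by omega⟩
    have hw : ‖(Complex.I / ξ) ^ m‖ = 1 / |ξ| ^ m := by simp
    rw [Nat.add_sub_cancel, splineFourier_zero_eq le_rfl hξ, norm_mul, hw]
    calc _ ≤ 1 / |ξ| ^ m * (2 * (m + 1 : ℕ) / |ξ|) := by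
          gcongr
          exact norm_splineFourier_zero_zero_le (by omega) hξ
      _ = _ := by
          field_simp
          ring
  · exact (norm_splineFourier_sub_one_one_le (by omega) hξ).trans_eq (by ring)
  · exact (norm_splineFourier_sub_one_two_le hs hξ).trans_eq (by ring)

end SplineFourier

section PoissonSummation

open scoped FourierTransform

lemma tsum_eq_tsum_fourier_of_hasCompactSupport {f : ℝ → ℂ} (hf : Continuous f)
    (hsupp : HasCompactSupport f) (hsum : Summable fun m : ℤ => 𝓕 f m) :
    ∑' m : ℤ, f m = ∑' m : ℤ, 𝓕 f m := by
  have hdecay : f =O[Filter.cocompact ℝ] fun x => |x| ^ (-(2 : ℝ)) := by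
    rw [hasCompactSupport_iff_eventuallyEq, Filter.coclosedCompact_eq_cocompact] at hsupp
    exact hsupp.trans_isBigO (Asymptotics.isBigO_zero _ _)
  simpa using Real.tsum_eq_tsum_fourier_of_rpow_decay_of_summable hf one_lt_two hdecay hsum 0

variable {F : ℝ → ℂ}

lemma support_comp_div_mul_subset (hF : Function.support F ⊆ Set.Ioo (-1) 1) (g : ℝ → ℂ) {M : ℝ}
    (hM : 0 < M) : Function.support (fun u => F (u / M) * g u) ⊆ Set.Ioo (-M) M := by
  intro u hu
  obtain ⟨h1, h2⟩ := hF (left_ne_zero_of_mul hu)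
  rw [lt_div_iff₀ hM, neg_one_mul] at h1
  exact ⟨h1, (div_lt_one hM).1 h2⟩

lemma fourier_comp_div_mul_exp (hF : Function.support F ⊆ Set.Ioo (-1) 1) {M : ℝ} (hM : 0 < M)
    (t w : ℝ) :
    𝓕 (fun u : ℝ => F (u / M) * Complex.exp (u * t * Complex.I)) w =
      M * ∫ x in (-1 : ℝ)..1, F x * Complex.exp ((M * (t - 2 * π * w) : ℝ) * x * Complex.I) := by
  have hsupp := (support_comp_div_mul_subset hF (fun v : ℝ =>
    Complex.exp (v * t * Complex.I) * Complex.exp (↑(-2 * π * v * w) * Complex.I)) hM).trans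
      Set.Ioo_subset_Ioc_self
  have hscale := intervalIntegral.integral_comp_div (a := -M) (b := M)
    (fun x : ℝ => F x * Complex.exp ((M * (t - 2 * π * w) : ℝ) * x * Complex.I)) hM.ne'
  rw [neg_div, div_self hM.ne', Complex.real_smul] at hscale
  have hM' : (M : ℂ) ≠ 0 := Complex.ofReal_ne_zero.2 hM.ne'
  simp only [Real.fourier_real_eq_integral_exp_smul, smul_eq_mul,
    mul_comm (Complex.exp (↑(-2 * π * _ * w) * Complex.I)), mul_assoc (F _)]
  rw [← intervalIntegral.integral_eq_integral_of_support_subset hsupp, ← hscale]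
  refine intervalIntegral.integral_congr fun v _ => ?_
  rw [← Complex.exp_add]
  congr 2
  push_cast
  field_simp
  ring

lemma sum_Icc_mul_exp_eq_tsum (hcont : Continuous F) (hF : Function.support F ⊆ Set.Ioo (-1) 1)
    (N : ℕ) (t : ℝ)
    (hsum : Summable fun m : ℤ => ∫ x in (-1 : ℝ)..1,
      F x * Complex.exp ((((N : ℝ) + 1) * (t + 2 * π * m) : ℝ) * x * Complex.I)) :
    ∑ k ∈ Finset.Icc (-(N : ℤ)) N,
        F ((k : ℝ) / ((N : ℝ) + 1)) * Complex.exp (k * t * Complex.I) =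
      ((N : ℝ) + 1 : ℝ) * ∑' m : ℤ, ∫ x in (-1 : ℝ)..1,
        F x * Complex.exp ((((N : ℝ) + 1) * (t + 2 * π * m) : ℝ) * x * Complex.I) := by
  set M : ℝ := (N : ℝ) + 1 with hMdef
  have hM : 0 < M := by positivity
  set f : ℝ → ℂ := fun u => F (u / M) * Complex.exp (u * t * Complex.I) with hf
  have hsupp : Function.support f ⊆ Set.Ioo (-M) M := support_comp_div_mul_subset hF _ hM
  have hfourier (m : ℤ) : 𝓕 f (m : ℝ) = M * ∫ x in (-1 : ℝ)..1,
      F x * Complex.exp ((M * (t + 2 * π * (-m : ℤ)) : ℝ) * x * Complex.I) := by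
    rw [fourier_comp_div_mul_exp hF hM, Int.cast_neg, mul_neg, ← sub_eq_add_neg]
  have hpoisson := tsum_eq_tsum_fourier_of_hasCompactSupport (f := f) (by fun_prop)
    (.of_support_subset_isCompact isCompact_Icc (hsupp.trans Set.Ioo_subset_Icc_self)) (by
      simp only [hfourier]
      exact ((Equiv.neg ℤ).summable_iff.2 hsum).mul_left _)
  simp only [hfourier, tsum_mul_left] at hpoisson
  rw [← (Equiv.neg ℤ).tsum_eq]
  simp only [Equiv.neg_apply]
  rw [← hpoisson, tsum_eq_sum (s := Finset.Icc (-(N : ℤ)) N)]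
  · simp [hf]
  · intro k hk
    by_contra hne
    obtain ⟨h1, h2⟩ := hsupp hne
    rw [Finset.mem_Icc] at hk
    rw [hMdef] at h1 h2
    norm_cast at h1 h2
    omega

end PoissonSummation

section LatticeSums

lemma hasSum_nat_one_div_two_mul_add_one_pow_four :
    HasSum (fun n : ℕ => 1 / (2 * n + 1 : ℝ) ^ 4) (π ^ 4 / 96) := by
  have hodd : Summable fun n : ℕ => 1 / ((2 * n + 1 : ℕ) : ℝ) ^ 4 :=
    hasSum_zeta_four.summable.comp_injective (i := fun n => 2 * n + 1) fun a b h => by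
      simpa using h
  have hterm (n : ℕ) : 1 / ((2 * n : ℕ) : ℝ) ^ 4 = 1 / (n : ℝ) ^ 4 * (1 / 16) := by
    push_cast
    ring
  have heven : HasSum (fun n : ℕ => 1 / ((2 * n : ℕ) : ℝ) ^ 4) (π ^ 4 / 90 * (1 / 16)) := by
    simp only [hterm]
    exact hasSum_zeta_four.mul_right _
  have htotal := hasSum_zeta_four.unique
    (HasSum.even_add_odd (f := fun n : ℕ => 1 / (n : ℝ) ^ 4) heven hodd.hasSum)
  have h := hodd.hasSum
  rw [show ∑' n : ℕ, 1 / ((2 * n + 1 : ℕ) : ℝ) ^ 4 = π ^ 4 / 96 by linarith] at h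
  simpa using h

lemma hasSum_int_one_div_two_mul_add_one_pow_four :
    HasSum (fun m : ℤ => 1 / (2 * m + 1 : ℝ) ^ 4) (π ^ 4 / 48) := by
  have h := hasSum_nat_one_div_two_mul_add_one_pow_four
  rw [show π ^ 4 / 48 = π ^ 4 / 96 + π ^ 4 / 96 by ring]
  refine .of_nat_of_neg_add_one h ?_
  convert h using 2
  push_cast
  ring

lemma hasSum_int_one_div_pow_four : HasSum (fun m : ℤ => 1 / (m : ℝ) ^ 4) (π ^ 4 / 45) := by
  have hpos : HasSum (fun n : ℕ => 1 / ((n : ℝ) + 1) ^ 4) (π ^ 4 / 90) := by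
    simpa using (hasSum_nat_add_iff' 1).2 hasSum_zeta_four
  rw [show π ^ 4 / 45 = π ^ 4 / 90 + π ^ 4 / 90 by ring]
  refine .of_nat_of_neg_add_one hasSum_zeta_four ?_
  convert hpos using 2
  push_cast
  ring

lemma abs_two_mul_add_one_mul_le {t : ℝ} (htπ : t ≤ π) (m : ℤ) :
    |(2 * m + 1 : ℝ)| * t ≤ |t + 2 * π * m| := by
  rcases le_or_gt 0 m with hm | hm
  · have hm' : (0 : ℝ) ≤ m := by exact_mod_cast hm
    rw [abs_of_nonneg (by linarith)]
    refine le_trans ?_ (le_abs_self _)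
    nlinarith
  · have hm' : (m : ℝ) ≤ -1 := by exact_mod_cast Int.le_sub_one_of_lt hm
    rw [abs_of_nonpos (by linarith)]
    refine le_trans ?_ (neg_le_abs _)
    nlinarith

end LatticeSums

section SplineSum

variable {s N : ℕ}

/-- The sampled exponential sum of `x ^ l` times the perfect spline. Up to the factor
`((N + 1) * I) ^ l / gnorm s N` its real part is the `l`-th derivative of `sigmaT s N`. -/
noncomputable def splineSum (s N l : ℕ) (t : ℝ) : ℂ :=
  ∑ k ∈ Finset.Icc (-(N : ℤ)) N, ((k : ℂ) / ((N : ℂ) + 1)) ^ l *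
    gtilde s ((k : ℝ) / (2 * ((N : ℝ) + 1))) * Complex.exp (k * t * Complex.I)

lemma gtilde_div_two_mul (s N : ℕ) (k : ℝ) :
    gtilde s (k / (2 * ((N : ℝ) + 1))) = fspline s (s - 1) (k / ((N : ℝ) + 1)) := by
  rw [gtilde]
  congr 1
  field_simp

lemma div_add_one_mem_Icc {k : ℤ} (hk : k ∈ Finset.Icc (-(N : ℤ)) N) :
    (k : ℝ) / ((N : ℝ) + 1) ∈ Set.Icc (-1 : ℝ) 1 := by
  obtain ⟨h1, h2⟩ := Finset.mem_Icc.1 hk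
  have hN : (0 : ℝ) < (N : ℝ) + 1 := by positivity
  rw [Set.mem_Icc, le_div_iff₀ hN, div_le_one hN, neg_one_mul]
  norm_cast
  omega

lemma splineSum_eq_tsum (hs : 2 ≤ s) (N l : ℕ) (t : ℝ)
    (hsum : Summable fun m : ℤ => splineFourier s (s - 1) l (((N : ℝ) + 1) * (t + 2 * π * m))) :
    splineSum s N l t = ((N : ℝ) + 1 : ℝ) *
      ∑' m : ℤ, splineFourier s (s - 1) l (((N : ℝ) + 1) * (t + 2 * π * m)) := by
  obtain ⟨r, rfl⟩ : ∃ r, s = r + 2 := ⟨s - 2, by omega⟩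
  have hle : (-1 : ℝ) ≤ 1 := by norm_num
  set F : ℝ → ℂ := fun x =>
    (x : ℂ) ^ l * (Set.IccExtend hle (fun y => fspline (r + 2) (r + 1) y) x : ℝ) with hF
  have hcont : Continuous F := by
    have := ((continuous_fspline_succ (r + 2) r).comp continuous_subtype_val).Icc_extend' (h := hle)
    exact (by fun_prop : Continuous fun x : ℝ => (x : ℂ) ^ l).mul
      (Complex.continuous_ofReal.comp this)
  have hsupp : Function.support F ⊆ Set.Ioo (-1) 1 := by
    refine Function.support_subset_iff'.2 fun x hx => ?_
    simp only [hF]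
    rcases le_or_gt x (-1) with h | h
    · simp [Set.IccExtend_of_le_left hle _ h, fspline_succ_neg_one]
    · have h1 : 1 ≤ x := not_lt.1 fun h1 => hx ⟨h, h1⟩
      simp [Set.IccExtend_of_right_le hle _ h1, fspline_succ_one_eq_zero le_rfl]
  have hmem {x : ℝ} (hx : x ∈ Set.Icc (-1 : ℝ) 1) :
      F x = (x : ℂ) ^ l * fspline (r + 2) (r + 1) x := by
    simp only [hF, Set.IccExtend_of_mem hle _ hx]
  have hint (ξ : ℝ) : ∫ x in (-1 : ℝ)..1, F x * Complex.exp (ξ * x * Complex.I) =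
      splineFourier (r + 2) (r + 2 - 1) l ξ := by
    refine intervalIntegral.integral_congr fun x hx => ?_
    rw [Set.uIcc_of_le hle] at hx
    simp only [hmem hx]
    exact mul_right_comm _ _ _
  have hpoisson := sum_Icc_mul_exp_eq_tsum hcont hsupp N t (by simpa only [hint] using hsum)
  simp only [hint] at hpoisson
  rw [← hpoisson, splineSum]
  refine Finset.sum_congr rfl fun k hk => ?_
  rw [hmem (div_add_one_mem_Icc hk), gtilde_div_two_mul]
  push_cast
  rfl

lemma norm_splineFourier_sub_one_le_of_le (hs : 4 ≤ s) {l : ℕ} (hl : l ≤ 2) {A u ξ : ℝ}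
    (hA : 0 < A) (hu : 1 ≤ |u|) (hξ : A * |u| ≤ |ξ|) :
    ‖splineFourier s (s - 1) l ξ‖ ≤ 2 ^ l * (2 * s) / A ^ s * (1 / u ^ 4) := by
  have hu0 : 0 < |u| := one_pos.trans_le hu
  have hξ0 : ξ ≠ 0 := abs_pos.1 ((mul_pos hA hu0).trans_le hξ)
  calc ‖splineFourier s (s - 1) l ξ‖ ≤ 2 ^ l * (2 * s) / |ξ| ^ s :=
        norm_splineFourier_sub_one_le (by omega) hl hξ0
    _ ≤ 2 ^ l * (2 * s) / (A * |u|) ^ s := by gcongr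
    _ = 2 ^ l * (2 * s) / A ^ s * (1 / |u| ^ s) := by
        rw [mul_pow, div_mul_div_comm, mul_one]
    _ ≤ 2 ^ l * (2 * s) / A ^ s * (1 / |u| ^ 4) := by
        gcongr
    _ = 2 ^ l * (2 * s) / A ^ s * (1 / u ^ 4) := by rw [Even.pow_abs (by decide)]

lemma norm_splineSum_le (hs : 4 ≤ s) (N : ℕ) {l : ℕ} (hl : l ≤ 2) {t : ℝ} (ht : 0 < t)
    (htπ : t ≤ π) :
    ‖splineSum s N l t‖ ≤
      ((N : ℝ) + 1) * (2 ^ l * (2 * s) / (((N : ℝ) + 1) * t) ^ s * (π ^ 4 / 48)) := by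
  have hterm (m : ℤ) : ‖splineFourier s (s - 1) l (((N : ℝ) + 1) * (t + 2 * π * m))‖ ≤
      2 ^ l * (2 * s) / (((N : ℝ) + 1) * t) ^ s * (1 / (2 * m + 1 : ℝ) ^ 4) := by
    have hodd : (1 : ℝ) ≤ |(2 * m + 1 : ℝ)| := by
      exact_mod_cast Int.one_le_abs (by omega : 2 * m + 1 ≠ 0)
    refine norm_splineFourier_sub_one_le_of_le hs hl (by positivity) hodd ?_
    rw [abs_mul, abs_of_pos (by positivity : (0 : ℝ) < (N : ℝ) + 1), mul_assoc, mul_comm t]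
    gcongr
    exact abs_two_mul_add_one_mul_le htπ m
  have hbound := hasSum_int_one_div_two_mul_add_one_pow_four.mul_left
    (2 ^ l * (2 * s) / (((N : ℝ) + 1) * t) ^ s)
  rw [splineSum_eq_tsum (by omega) N l t (.of_norm_bounded hbound.summable hterm), norm_mul,
    Complex.norm_of_nonneg (by positivity)]
  gcongr
  exact tsum_of_norm_bounded hbound hterm

lemma splineFourier_sub_one_zero (hs : 0 < s) :
    splineFourier s (s - 1) 0 0 = ((4 / (2 ^ s * (s - 1).factorial) : ℝ) : ℂ) := by
  rw [← integral_fspline_sub_one hs, splineFourier]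
  simp

lemma splineSum_zero_zero (s N : ℕ) : splineSum s N 0 0 = (gnorm s N : ℂ) := by
  simp [splineSum, gnorm]

lemma abs_gnorm_sub_le (hs : 4 ≤ s) (N : ℕ) :
    |gnorm s N - ((N : ℝ) + 1) * (4 / (2 ^ s * (s - 1).factorial))| ≤
      ((N : ℝ) + 1) * (2 * s / (((N : ℝ) + 1) * (2 * π)) ^ s * (π ^ 4 / 45)) := by
  set f : ℤ → ℂ := fun m => splineFourier s (s - 1) 0 (((N : ℝ) + 1) * (0 + 2 * π * m)) with hf
  have hterm {m : ℤ} (hm : m ≠ 0) : ‖f m‖ ≤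
      2 * s / (((N : ℝ) + 1) * (2 * π)) ^ s * (1 / (m : ℝ) ^ 4) := by
    have hone : (1 : ℝ) ≤ |(m : ℝ)| := by exact_mod_cast Int.one_le_abs hm
    have hA : (0 : ℝ) < ((N : ℝ) + 1) * (2 * π) := by positivity
    have h := norm_splineFourier_sub_one_le_of_le hs (Nat.zero_le 2) hA hone
      (ξ := ((N : ℝ) + 1) * (0 + 2 * π * m))
      (by rw [zero_add, ← abs_of_pos hA, ← abs_mul, mul_assoc ((N : ℝ) + 1)])
    simpa only [pow_zero, one_mul] using h
  have hbound := hasSum_int_one_div_pow_four.mul_left (2 * s / (((N : ℝ) + 1) * (2 * π)) ^ s)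
  have hite (m : ℤ) : ‖if m = 0 then 0 else f m‖ ≤
      2 * s / (((N : ℝ) + 1) * (2 * π)) ^ s * (1 / (m : ℝ) ^ 4) := by
    split_ifs with hm
    · rw [norm_zero]
      positivity
    · exact hterm hm
  have hsum : Summable f := by
    refine .of_norm_bounded_eventually hbound.summable ?_
    filter_upwards [(Set.finite_singleton (0 : ℤ)).compl_mem_cofinite] with m hm using hterm hm
  have hgnorm := splineSum_eq_tsum (by omega) N 0 0 hsum
  rw [splineSum_zero_zero, hsum.tsum_eq_add_tsum_ite 0] at hgnorm
  simp only [hf, Int.cast_zero, mul_zero, add_zero, splineFourier_sub_one_zero (by omega : 0 < s)]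
    at hgnorm
  rw [← Real.norm_eq_abs, ← Complex.norm_real, Complex.ofReal_sub, hgnorm, mul_add,
    ← Complex.ofReal_mul, add_sub_cancel_left, norm_mul, Complex.norm_of_nonneg (by positivity)]
  gcongr
  exact tsum_of_norm_bounded hbound hite

lemma four_mul_factorial_le_pow (hs : 4 ≤ s) : 4 * s.factorial ≤ s ^ s := by
  induction s, hs using Nat.le_induction with
  | base => decide
  | succ s hs ih =>
    rw [Nat.factorial_succ, pow_succ', mul_left_comm]
    gcongr
    exact ih.trans (by gcongr; omega)

lemma two_mul_div_pow_mul_le (hs : 4 ≤ s) (hN : s ≤ N + 1) :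
    2 * s / (((N : ℝ) + 1) * (2 * π)) ^ s * (π ^ 4 / 45) ≤
      1 / 360 * (4 / (2 ^ s * (s - 1).factorial)) := by
  have hfac : 4 * (s * (s - 1).factorial : ℝ) ≤ ((N : ℝ) + 1) ^ s := by
    have h := (four_mul_factorial_le_pow hs).trans (Nat.pow_le_pow_left hN s)
    rw [← Nat.mul_factorial_pred (by omega)] at h
    exact_mod_cast h
  have hπ : π ^ 4 ≤ π ^ s := pow_le_pow_right₀ (by linarith [Real.pi_gt_three]) hs
  have : (0 : ℝ) < s := by exact_mod_cast (by omega : 0 < s)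
  rw [mul_pow, mul_pow, div_mul_div_comm, div_mul_div_comm,
    div_le_div_iff₀ (by positivity) (by positivity)]
  calc 2 * s * π ^ 4 * (360 * (2 ^ s * (s - 1).factorial))
      = 180 * 2 ^ s * π ^ 4 * (4 * (s * (s - 1).factorial)) := by ring
    _ ≤ 180 * 2 ^ s * π ^ s * ((N : ℝ) + 1) ^ s := by gcongr
    _ = _ := by ring

lemma le_gnorm (hs : 4 ≤ s) (hN : s ≤ N + 1) :
    359 / 360 * (((N : ℝ) + 1) * (4 / (2 ^ s * (s - 1).factorial))) ≤ gnorm s N := by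
  have hdiff := (abs_le.1 (abs_gnorm_sub_le hs N)).1
  have hsmall := mul_le_mul_of_nonneg_left (two_mul_div_pow_mul_le hs hN)
    (by positivity : (0 : ℝ) ≤ (N : ℝ) + 1)
  linarith

lemma gnorm_pos (hs : 4 ≤ s) (hN : s ≤ N + 1) : 0 < gnorm s N :=
  lt_of_lt_of_le (by positivity) (le_gnorm hs hN)

/-- The bound `c_{0,s} / ((N + 1) t) ^ s` on `|sigmaT s N t|`; the bounds on its derivatives are
multiples of it. -/
noncomputable def kernelDecay (s N : ℕ) (t : ℝ) : ℝ := cConst 0 s / (((N : ℝ) + 1) * t) ^ s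

lemma kernelDecay_nonneg (s N : ℕ) {t : ℝ} (ht : 0 ≤ t) : 0 ≤ kernelDecay s N t := by
  simp only [kernelDecay, cConst]
  positivity

lemma norm_splineSum_div_gnorm_le (hs : 4 ≤ s) (hN : s ≤ N + 1) {l : ℕ} (hl : l ≤ 2) {t : ℝ}
    (ht : 0 < t) (htπ : t ≤ π) :
    ‖splineSum s N l t‖ / gnorm s N ≤ 2 ^ l * kernelDecay s N t := by
  have : (0 : ℝ) < s := by exact_mod_cast (by omega : 0 < s)
  have hπ : π ^ 4 / 48 ≤ 1.02 * (359 / 360) * 2 := by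
    have : π ^ 4 ≤ 3.1416 ^ 4 := by
      gcongr
      exact Real.pi_lt_d4.le
    norm_num at this ⊢
    linarith
  have hdecay : 0 ≤ 2 ^ l * kernelDecay s N t :=
    mul_nonneg (by positivity) (kernelDecay_nonneg s N ht.le)
  rw [div_le_iff₀ (gnorm_pos hs hN)]
  calc _ ≤ ((N : ℝ) + 1) * (2 ^ l * (2 * s) / (((N : ℝ) + 1) * t) ^ s * (π ^ 4 / 48)) :=
        norm_splineSum_le hs N hl ht htπ
    _ ≤ ((N : ℝ) + 1) * (2 ^ l * (2 * s) / (((N : ℝ) + 1) * t) ^ s *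
          (1.02 * (359 / 360) * 2)) := by gcongr
    _ = 2 ^ l * kernelDecay s N t *
          (359 / 360 * (((N : ℝ) + 1) * (4 / (2 ^ s * (s - 1).factorial)))) := by
        simp only [kernelDecay, cConst]
        field_simp
        norm_num
    _ ≤ _ := by
        gcongr
        exact le_gnorm hs hN

end SplineSum

section Kernel

lemma hasDerivAt_splineSum (s N l : ℕ) (t : ℝ) :
    HasDerivAt (splineSum s N l) (((N : ℂ) + 1) * Complex.I * splineSum s N (l + 1) t) t := by
  have hN : (N : ℂ) + 1 ≠ 0 := Nat.cast_add_one_ne_zero N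
  have h := HasDerivAt.fun_sum (u := Finset.Icc (-(N : ℤ)) N) fun k _ =>
    (hasDerivAt_exp_mul_mul_I k t).const_mul (((k : ℂ) / ((N : ℂ) + 1)) ^ l *
      gtilde s ((k : ℝ) / (2 * ((N : ℝ) + 1))))
  simp only [Complex.ofReal_intCast] at h
  refine h.congr_deriv ?_
  rw [splineSum, Finset.mul_sum]
  refine Finset.sum_congr rfl fun k _ => ?_
  rw [pow_succ]
  field_simp

lemma sigmaT_eq (s N : ℕ) (t : ℝ) : sigmaT s N t = (splineSum s N 0 t).re / gnorm s N := by
  simp only [sigmaT, splineSum, pow_zero, one_mul]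
  rw [← Complex.ofReal_one, ← Complex.ofReal_div, Complex.re_ofReal_mul, one_div_mul_eq_div]

lemma iteratedDeriv_sigmaT (s N l : ℕ) :
    iteratedDeriv l (sigmaT s N) =
      fun t => ((((N : ℂ) + 1) * Complex.I) ^ l * splineSum s N l t).re / gnorm s N := by
  induction l with
  | zero =>
    funext t
    rw [iteratedDeriv_zero, pow_zero, one_mul, sigmaT_eq]
  | succ l ih =>
    funext t
    have h := (hasDerivAt_splineSum s N l t).const_mul ((((N : ℂ) + 1) * Complex.I) ^ l)
    rw [iteratedDeriv_succ, ih, pow_succ, mul_assoc]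
    exact ((Complex.reCLM.hasFDerivAt.comp_hasDerivAt t h).div_const _).deriv

lemma abs_iteratedDeriv_sigmaT_le {s N l : ℕ} (hs : 4 ≤ s) (hN : s ≤ N + 1) (hl : l ≤ 2) {t : ℝ}
    (ht : 0 < t) (htπ : t ≤ π) :
    |iteratedDeriv l (sigmaT s N) t| ≤ (2 * ((N : ℝ) + 1)) ^ l * kernelDecay s N t := by
  have hg := gnorm_pos hs hN
  have hnorm : ‖(((N : ℂ) + 1) * Complex.I) ^ l‖ = ((N : ℝ) + 1) ^ l := by
    rw [norm_pow, norm_mul, Complex.norm_I, mul_one, ← Nat.cast_add_one, Complex.norm_natCast,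
      Nat.cast_add_one]
  rw [iteratedDeriv_sigmaT]
  calc |((((N : ℂ) + 1) * Complex.I) ^ l * splineSum s N l t).re / gnorm s N|
      ≤ ‖(((N : ℂ) + 1) * Complex.I) ^ l * splineSum s N l t‖ / gnorm s N := by
        rw [abs_div, abs_of_pos hg]
        gcongr
        exact Complex.abs_re_le_norm _
    _ = ((N : ℝ) + 1) ^ l * (‖splineSum s N l t‖ / gnorm s N) := by
        rw [norm_mul, hnorm, mul_div_assoc]
    _ ≤ ((N : ℝ) + 1) ^ l * (2 ^ l * kernelDecay s N t) := by
        gcongr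
        exact norm_splineSum_div_gnorm_le hs hN hl ht htπ
    _ = (2 * ((N : ℝ) + 1)) ^ l * kernelDecay s N t := by rw [mul_pow]; ring

lemma cConst_one_div_eq {s : ℕ} (hs : 1 ≤ s) (N : ℕ) (t : ℝ) :
    cConst 1 s / (((N : ℝ) + 1) ^ (s - 1) * t ^ s) = 2 * ((N : ℝ) + 1) * kernelDecay s N t := by
  obtain ⟨r, rfl⟩ : ∃ r, s = r + 1 := ⟨s - 1, by omega⟩
  simp only [kernelDecay, cConst, mul_pow, Nat.add_sub_cancel, pow_succ ((N : ℝ) + 1)]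
  field_simp

lemma four_mul_kernelDecay_le {s : ℕ} (hs : 2 ≤ s) (N : ℕ) {t : ℝ} (ht : 0 ≤ t) :
    4 * (((N : ℝ) + 1) ^ 2 * kernelDecay s N t) ≤
      cConst 2 s / (((N : ℝ) + 1) ^ (s - 2) * t ^ s) := by
  obtain ⟨r, rfl⟩ : ∃ r, s = r + 2 := ⟨s - 2, by omega⟩
  calc 4 * (((N : ℝ) + 1) ^ 2 * kernelDecay (r + 2) N t)
      = 1.02 * (r + 2 - 1).factorial * 2 ^ (r + 2) * (4 * (r + 2 : ℕ)) /
          (((N : ℝ) + 1) ^ r * t ^ (r + 2)) := by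
        simp only [kernelDecay, cConst, mul_pow, pow_add ((N : ℝ) + 1)]
        field_simp
    _ ≤ _ := by
        rw [cConst, Nat.add_sub_cancel]
        gcongr
        linarith

/-- The trigonometric kernel as a polynomial in `cos t`. -/
noncomputable def kernelPoly (s N : ℕ) : Polynomial ℝ :=
  ∑ k ∈ Finset.Icc (-(N : ℤ)) N, Polynomial.C (gtilde s ((k : ℝ) / (2 * ((N : ℝ) + 1))) /
    gnorm s N) * Polynomial.Chebyshev.T ℝ k

lemma sigmaT_eq_eval_cos (s N : ℕ) (t : ℝ) :
    sigmaT s N t = (kernelPoly s N).eval (Real.cos t) := by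
  rw [sigmaT_eq, splineSum, kernelPoly, Complex.re_sum, Polynomial.eval_finsetSum,
    Finset.sum_div]
  refine Finset.sum_congr rfl fun k _ => ?_
  have hre : (Complex.exp (k * t * Complex.I)).re = Real.cos (k * t) := by
    rw [← Complex.exp_ofReal_mul_I_re]
    push_cast
    rfl
  rw [pow_zero, one_mul, Complex.re_ofReal_mul, hre, Polynomial.eval_mul, Polynomial.eval_C,
    Polynomial.Chebyshev.T_real_cos, mul_div_right_comm]

lemma iteratedDeriv_one_sigmaT (s N : ℕ) (t : ℝ) :
    iteratedDeriv 1 (sigmaT s N) t =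
      -(Real.sin t * (kernelPoly s N).derivative.eval (Real.cos t)) := by
  have h := ((kernelPoly s N).hasDerivAt (Real.cos t)).comp t (Real.hasDerivAt_cos t)
  rw [iteratedDeriv_one, funext (sigmaT_eq_eval_cos s N)]
  exact h.deriv.trans (by ring)

lemma iteratedDeriv_two_sigmaT (s N : ℕ) (t : ℝ) :
    iteratedDeriv 2 (sigmaT s N) t =
      Real.sin t ^ 2 * (kernelPoly s N).derivative.derivative.eval (Real.cos t) -
        Real.cos t * (kernelPoly s N).derivative.eval (Real.cos t) := by
  have h := ((kernelPoly s N).derivative.hasDerivAt (Real.cos t)).comp t (Real.hasDerivAt_cos t)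
  rw [iteratedDeriv_succ, funext (iteratedDeriv_one_sigmaT s N)]
  refine ((Real.hasDerivAt_sin t).mul h).neg.deriv.trans ?_
  rw [Function.comp_apply]
  ring

end Kernel

section Rotations

open Matrix

lemma isSO3_iff_mem_specialOrthogonalGroup {r : Mat3} :
    IsSO3 r ↔ r ∈ specialOrthogonalGroup (Fin 3) ℝ :=
  (and_congr_left' (mem_orthogonalGroup_iff' (Fin 3) ℝ).symm).trans
    mem_specialOrthogonalGroup_iff.symm

lemma IsSO3.inv_eq {r : Mat3} (hr : IsSO3 r) : r⁻¹ = rᵀ := inv_eq_left_inv hr.1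

lemma IsSO3.mul_transpose {r : Mat3} (hr : IsSO3 r) : r * rᵀ = 1 := mul_eq_one_comm.1 hr.1

lemma IsSO3.inv {r : Mat3} (hr : IsSO3 r) : IsSO3 r⁻¹ := by
  rw [hr.inv_eq]
  exact ⟨by rw [transpose_transpose, hr.mul_transpose], by rw [det_transpose, hr.2]⟩

lemma IsSO3.mul {x y : Mat3} (hx : IsSO3 x) (hy : IsSO3 y) : IsSO3 (x * y) :=
  isSO3_iff_mem_specialOrthogonalGroup.2 (mul_mem (isSO3_iff_mem_specialOrthogonalGroup.1 hx)
    (isSO3_iff_mem_specialOrthogonalGroup.1 hy))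

lemma IsSO3.adjugate_eq {r : Mat3} (hr : IsSO3 r) : r.adjugate = rᵀ := by
  rw [← hr.inv_eq, inv_def, hr.2, Ring.inverse_one, one_smul]

lemma transpose_exp_mul_exp {A : Mat3} (hA : Aᵀ = -A) :
    (NormedSpace.exp A)ᵀ * NormedSpace.exp A = 1 := by
  rw [← exp_transpose, hA, ← exp_add_of_commute _ _ (Commute.refl A).neg_left, neg_add_cancel,
    NormedSpace.exp_zero]

lemma isSO3_exp {A : Mat3} (hA : Aᵀ = -A) : IsSO3 (NormedSpace.exp A) := by
  refine ⟨transpose_exp_mul_exp hA, ?_⟩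
  set B : Mat3 := (1 / 2 : ℝ) • A with hB
  have hsq : NormedSpace.exp A = NormedSpace.exp B * NormedSpace.exp B := by
    rw [← exp_add_of_commute _ _ (Commute.refl B), hB, ← add_smul, add_halves, one_smul]
  have hBt : Bᵀ = -B := by rw [hB, transpose_smul, hA, smul_neg]
  have hdet := congrArg det (transpose_exp_mul_exp hBt)
  rw [hsq, det_mul]
  rwa [det_mul, det_transpose, det_one] at hdet

lemma transpose_Lgen (i : Fin 3) : (Lgen i)ᵀ = -Lgen i := by
  ext a b
  fin_cases i <;> fin_cases a <;> fin_cases b <;> simp [Lgen]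

lemma isSO3_exp_smul_Lgen (i : Fin 3) (t : ℝ) : IsSO3 (NormedSpace.exp (t • Lgen i)) :=
  isSO3_exp (by rw [transpose_smul, transpose_Lgen, smul_neg])

/-- The cosine of the rotation angle. -/
noncomputable def rotCos (r : Mat3) : ℝ := (trace r - 1) / 2

/-- The components of the rotation axis, scaled by the sine of the rotation angle. -/
noncomputable def rotAxial (r : Mat3) (n : Fin 3) : ℝ := -trace (Lgen n * r) / 2

/-- The symmetric part of `r` minus `cos ω`. For the rotation by the angle `ω` about the unit
vector `a` it equals `(1 - cos ω) a aᵀ`. -/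
noncomputable def rotSym (r : Mat3) : Mat3 := (1 / 2 : ℝ) • (r + rᵀ) - rotCos r • 1

/-- The skew part of `r`. For the rotation by the angle `ω` about the unit vector `a` it is
`sin ω` times the cross product with `a`. -/
noncomputable def rotSkew (r : Mat3) : Mat3 := (1 / 2 : ℝ) • (r - rᵀ)

lemma rotSkew_mul_self_apply (r : Mat3) (i n : Fin 3) :
    (rotSkew r * rotSkew r) i n =
      rotAxial r i * rotAxial r n - (∑ k, rotAxial r k ^ 2) * (1 : Mat3) i n := by
  simp only [rotSkew, rotAxial, mul_apply, trace, diag_apply, Fin.sum_univ_three,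
    Matrix.smul_apply, Matrix.sub_apply, transpose_apply, one_apply]
  fin_cases i <;> fin_cases n <;> simp [Lgen] <;> ring

lemma mul_self_eq_trace_smul_sub_add_adjugate (A : Mat3) :
    A * A = trace A • A - trace A.adjugate • 1 + A.adjugate := by
  rw [adjugate_fin_three]
  ext i n
  fin_cases i <;> fin_cases n <;>
  simp [mul_apply, trace, Fin.sum_univ_three] <;> ring

lemma trace_eq_two_mul_rotCos_add_one (r : Mat3) : trace r = 2 * rotCos r + 1 := by
  rw [rotCos]
  ring

lemma trace_rotSym (r : Mat3) : trace (rotSym r) = 1 - rotCos r := by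
  rw [rotSym, trace_sub, trace_smul, trace_add, trace_transpose, trace_smul, trace_one,
    trace_eq_two_mul_rotCos_add_one, Fintype.card_fin, smul_eq_mul, smul_eq_mul]
  ring

lemma rotSym_apply_comm (r : Mat3) (i n : Fin 3) : rotSym r i n = rotSym r n i := by
  have h : (rotSym r)ᵀ = rotSym r := by
    rw [rotSym, transpose_sub, transpose_smul, transpose_add, transpose_transpose, transpose_smul,
      transpose_one, add_comm]
  exact congrFun₂ h n i

lemma rotSkew_apply_comm (r : Mat3) (i n : Fin 3) : rotSkew r i n = -rotSkew r n i := by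
  have h : (rotSkew r)ᵀ = -rotSkew r := by
    rw [rotSkew, transpose_smul, transpose_sub, transpose_transpose, ← smul_neg, neg_sub]
  exact congrFun₂ h n i

lemma rotSym_add_rotCos_smul_add_rotSkew (r : Mat3) : rotSym r + rotCos r • 1 + rotSkew r = r := by
  rw [rotSym, rotSkew]
  module

section

variable {r : Mat3} (hr : IsSO3 r)
include hr

lemma IsSO3.mul_self_eq :
    r * r = (2 * rotCos r + 1) • r - (2 * rotCos r + 1) • 1 + rᵀ := by
  rw [mul_self_eq_trace_smul_sub_add_adjugate, hr.adjugate_eq, trace_transpose,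
    trace_eq_two_mul_rotCos_add_one]

lemma IsSO3.transpose_mul_transpose_eq :
    rᵀ * rᵀ = (2 * rotCos r + 1) • rᵀ - (2 * rotCos r + 1) • 1 + r := by
  simpa using congrArg transpose hr.mul_self_eq

lemma IsSO3.rotSym_mul_self : rotSym r * rotSym r = (1 - rotCos r) • rotSym r := by
  have hr1 := hr.1
  simp only [rotSym, mul_sub, sub_mul, mul_add, add_mul, smul_mul_assoc, mul_smul_comm, hr1,
    hr.mul_transpose, hr.mul_self_eq, hr.transpose_mul_transpose_eq, mul_one, one_mul]
  module

lemma IsSO3.rotSkew_mul_self :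
    rotSkew r * rotSkew r = (1 + rotCos r) • (rotSym r - (1 - rotCos r) • 1) := by
  simp only [rotSkew, rotSym, mul_sub, sub_mul, smul_mul_assoc, mul_smul_comm, hr.1,
    hr.mul_transpose, hr.mul_self_eq, hr.transpose_mul_transpose_eq]
  module

lemma IsSO3.sum_rotAxial_sq : ∑ k, rotAxial r k ^ 2 = (1 + rotCos r) * (1 - rotCos r) := by
  have h := congrArg trace hr.rotSkew_mul_self
  rw [trace_smul, trace_sub, trace_rotSym, trace_smul, trace_one] at h
  simp only [trace, diag_apply, rotSkew_mul_self_apply, one_apply_eq, Fin.sum_univ_three,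
    Fintype.card_fin, smul_eq_mul] at h
  rw [Fin.sum_univ_three]
  push_cast at h
  linear_combination -h / 2

lemma IsSO3.rotAxial_mul (i n : Fin 3) :
    rotAxial r i * rotAxial r n = (1 + rotCos r) * rotSym r i n := by
  have h := congrFun₂ hr.rotSkew_mul_self i n
  rw [rotSkew_mul_self_apply, hr.sum_rotAxial_sq, Matrix.smul_apply, Matrix.sub_apply,
    Matrix.smul_apply, smul_eq_mul, smul_eq_mul] at h
  linear_combination h

lemma IsSO3.abs_rotCos_le : |rotCos r| ≤ 1 := by
  have h : 0 ≤ (1 + rotCos r) * (1 - rotCos r) :=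
    hr.sum_rotAxial_sq ▸ Finset.sum_nonneg fun k _ => sq_nonneg (rotAxial r k)
  rw [← sq_le_one_iff_abs_le_one]
  linarith

lemma IsSO3.cos_rotAngle : Real.cos (rotAngle r) = rotCos r :=
  Real.cos_arccos (abs_le.1 hr.abs_rotCos_le).1 (abs_le.1 hr.abs_rotCos_le).2

lemma IsSO3.sum_rotSym_sq (i : Fin 3) :
    ∑ k, rotSym r i k ^ 2 = (1 - rotCos r) * rotSym r i i := by
  have h := congrFun₂ hr.rotSym_mul_self i i
  rw [mul_apply, Matrix.smul_apply, smul_eq_mul] at h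
  simpa only [rotSym_apply_comm r _ i, ← sq] using h

lemma IsSO3.sum_rotSkew_sq (i : Fin 3) :
    ∑ k, rotSkew r i k ^ 2 = (1 + rotCos r) * (1 - rotCos r - rotSym r i i) := by
  have h := congrFun₂ hr.rotSkew_mul_self i i
  simp only [mul_apply, rotSkew_apply_comm r _ i, mul_neg, ← sq, Finset.sum_neg_distrib,
    Matrix.smul_apply, Matrix.sub_apply, one_apply_eq, smul_eq_mul, mul_one] at h
  linear_combination -h

lemma IsSO3.rotSym_diag_mem_Icc (i : Fin 3) : rotSym r i i ∈ Set.Icc 0 (1 - rotCos r) := by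
  have hsq : rotSym r i i ^ 2 ≤ (1 - rotCos r) * rotSym r i i :=
    hr.sum_rotSym_sq i ▸ Finset.single_le_sum (f := fun k => rotSym r i k ^ 2)
      (fun k _ => sq_nonneg _) (Finset.mem_univ i)
  have hc := (abs_le.1 hr.abs_rotCos_le).2
  constructor <;> nlinarith

lemma IsSO3.abs_rotSym_apply_le {i n : Fin 3} (hin : i ≠ n) :
    |rotSym r i n| ≤ (1 - rotCos r) / 2 := by
  have hsq : rotSym r i i ^ 2 + rotSym r i n ^ 2 ≤ (1 - rotCos r) * rotSym r i i := by
    rw [← hr.sum_rotSym_sq i, ← Finset.sum_pair (f := fun k => rotSym r i k ^ 2) hin]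
    exact Finset.sum_le_univ_sum_of_nonneg fun k => sq_nonneg _
  refine abs_le_of_sq_le_sq (by nlinarith [sq_nonneg (rotSym r i i - (1 - rotCos r) / 2)]) ?_
  linarith [(abs_le.1 hr.abs_rotCos_le).2]

lemma IsSO3.rotSkew_apply_sq_le (i n : Fin 3) :
    rotSkew r i n ^ 2 ≤ (1 + rotCos r) * (1 - rotCos r) := by
  have hsq : rotSkew r i n ^ 2 ≤ (1 + rotCos r) * (1 - rotCos r - rotSym r i i) :=
    hr.sum_rotSkew_sq i ▸ Finset.single_le_sum (f := fun k => rotSkew r i k ^ 2)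
      (fun k _ => sq_nonneg _) (Finset.mem_univ n)
  have hc := (abs_le.1 hr.abs_rotCos_le).1
  nlinarith [(hr.rotSym_diag_mem_Icc i).1]

end

end Rotations

section ZonalDerivatives

open scoped Matrix.Norms.Operator in
lemma hasDerivAt_trace_mul_exp (A L : Mat3) (t : ℝ) :
    HasDerivAt (fun u : ℝ => Matrix.trace (A * NormedSpace.exp (u • L)))
      (Matrix.trace (A * (NormedSpace.exp (t • L) * L))) t := by
  have h := hasDerivAt_exp_smul_const L t (𝕂 := ℝ)
  let φ : Mat3 →ₗ[ℝ] ℝ := (Matrix.traceLinearMap (Fin 3) ℝ ℝ).comp (LinearMap.mulLeft ℝ A)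
  exact (LinearMap.toContinuousLinearMap φ).hasFDerivAt.comp_hasDerivAt t h

lemma trace_Lgen_mul_mul_Lgen (r : Mat3) (n i : Fin 3) :
    Matrix.trace (Lgen n * r * Lgen i) = r i n - if i = n then 2 * rotCos r + 1 else 0 := by
  simp only [rotCos, Matrix.trace, Matrix.diag_apply, Matrix.mul_apply, Fin.sum_univ_three]
  fin_cases i <;> fin_cases n <;> simp [Lgen] <;> ring

lemma rotAxial_eq_neg_trace_mul_Lgen (r : Mat3) (i : Fin 3) :
    rotAxial r i = -Matrix.trace (r * Lgen i) / 2 := by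
  rw [rotAxial, Matrix.trace_mul_comm]

lemma sigmaK_eq {x y : Mat3} (hx : IsSO3 x) (hy : IsSO3 y) (s N : ℕ) :
    sigmaK s N x y = (kernelPoly s N).eval (rotCos (y⁻¹ * x)) := by
  rw [sigmaK, sigmaT_eq_eval_cos, (hy.inv.mul hx).cos_rotAngle]

lemma hasDerivAt_rotCos_mul_exp (r : Mat3) (i : Fin 3) :
    HasDerivAt (fun u : ℝ => rotCos (r * NormedSpace.exp (u • Lgen i))) (-rotAxial r i) 0 := by
  have h := ((hasDerivAt_trace_mul_exp r (Lgen i) 0).sub_const 1).div_const 2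
  refine h.congr_deriv ?_
  rw [zero_smul, NormedSpace.exp_zero, Matrix.one_mul, rotAxial_eq_neg_trace_mul_Lgen]
  ring

lemma hasDerivAt_rotAxial_mul_exp (r : Mat3) (n i : Fin 3) :
    HasDerivAt (fun u : ℝ => rotAxial (r * NormedSpace.exp (u • Lgen i)) n)
      (-Matrix.trace (Lgen n * r * Lgen i) / 2) 0 := by
  have h := (hasDerivAt_trace_mul_exp (Lgen n * r) (Lgen i) 0).neg.div_const 2
  rw [zero_smul, NormedSpace.exp_zero, Matrix.one_mul] at h
  simp only [rotAxial, ← Matrix.mul_assoc]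
  exact h

lemma hasDerivAt_rotCos_exp_neg_mul (r : Mat3) (n : Fin 3) :
    HasDerivAt (fun u : ℝ => rotCos ((NormedSpace.exp (u • Lgen n))⁻¹ * r)) (rotAxial r n) 0 := by
  have h := hasDerivAt_trace_mul_exp r (Lgen n) (-0)
  have h2 := ((h.scomp (0 : ℝ) (hasDerivAt_neg (0 : ℝ))).sub_const 1).div_const 2
  rw [neg_zero, zero_smul, NormedSpace.exp_zero, Matrix.one_mul] at h2
  have hfun : (fun u : ℝ => rotCos ((NormedSpace.exp (u • Lgen n))⁻¹ * r)) =
      fun u : ℝ => (Matrix.trace (r * NormedSpace.exp ((-u) • Lgen n)) - 1) / 2 := by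
    ext u
    rw [rotCos, Matrix.trace_mul_comm, neg_smul, Matrix.exp_neg]
  rw [hfun]
  refine h2.congr_deriv ?_
  rw [rotAxial_eq_neg_trace_mul_Lgen, smul_eq_mul]
  ring

lemma Xy_sigmaK_eq {x y : Mat3} (hx : IsSO3 x) (hy : IsSO3 y) (s N : ℕ) (n : Fin 3) :
    Xy n (sigmaK s N) x y = (kernelPoly s N).derivative.eval (rotCos (y⁻¹ * x)) *
      rotAxial (y⁻¹ * x) n := by
  have hfun : (fun t : ℝ => sigmaK s N x (y * NormedSpace.exp (t • Lgen n))) = fun t : ℝ =>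
      (kernelPoly s N).eval (rotCos ((NormedSpace.exp (t • Lgen n))⁻¹ * (y⁻¹ * x))) := by
    ext t
    rw [sigmaK_eq hx (hy.mul (isSO3_exp_smul_Lgen n t)), Matrix.mul_inv_rev, Matrix.mul_assoc]
  have h := ((kernelPoly s N).hasDerivAt (rotCos ((NormedSpace.exp ((0 : ℝ) • Lgen n))⁻¹ *
    (y⁻¹ * x)))).comp (0 : ℝ) (hasDerivAt_rotCos_exp_neg_mul (y⁻¹ * x) n)
  rw [Xy, hfun]
  refine h.deriv.trans ?_
  rw [zero_smul, NormedSpace.exp_zero, inv_one, Matrix.one_mul]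

lemma Xx_Xy_sigmaK_eq {x y : Mat3} (hx : IsSO3 x) (hy : IsSO3 y) (s N : ℕ) (i n : Fin 3) :
    Xx i (Xy n (sigmaK s N)) x y =
      -((kernelPoly s N).derivative.derivative.eval (rotCos (y⁻¹ * x)) *
        (rotAxial (y⁻¹ * x) i * rotAxial (y⁻¹ * x) n)) -
      (kernelPoly s N).derivative.eval (rotCos (y⁻¹ * x)) *
        (((y⁻¹ * x) i n - if i = n then 2 * rotCos (y⁻¹ * x) + 1 else 0) / 2) := by
  have hfun : (fun t : ℝ => Xy n (sigmaK s N) (x * NormedSpace.exp (t • Lgen i)) y) =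
      fun t : ℝ => (kernelPoly s N).derivative.eval
        (rotCos (y⁻¹ * x * NormedSpace.exp (t • Lgen i))) *
          rotAxial (y⁻¹ * x * NormedSpace.exp (t • Lgen i)) n := by
    ext t
    rw [Xy_sigmaK_eq (hx.mul (isSO3_exp_smul_Lgen i t)) hy, ← Matrix.mul_assoc]
  have h := (((kernelPoly s N).derivative.hasDerivAt (rotCos (y⁻¹ * x *
    NormedSpace.exp ((0 : ℝ) • Lgen i)))).comp (0 : ℝ)
      (hasDerivAt_rotCos_mul_exp (y⁻¹ * x) i)).mul (hasDerivAt_rotAxial_mul_exp (y⁻¹ * x) n i)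
  rw [Xx, hfun]
  refine h.deriv.trans ?_
  rw [trace_Lgen_mul_mul_Lgen]
  simp only [zero_smul, NormedSpace.exp_zero, Matrix.mul_one, Function.comp_apply]
  ring

end ZonalDerivatives

section MixedDerivative

lemma one_add_cos_mul_le_two_mul_sin {θ : ℝ} (h0 : 0 < θ) (hπ : θ ≤ π) :
    (1 + Real.cos θ) * θ ≤ 2 * Real.sin θ := by
  obtain rfl | hlt := hπ.eq_or_lt
  · simp
  have hcos : 0 < Real.cos (θ / 2) := Real.cos_pos_of_mem_Ioo ⟨by linarith, by linarith⟩
  have htan := Real.le_tan (x := θ / 2) (by linarith) (by linarith)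
  rw [Real.tan_eq_sin_div_cos, le_div_iff₀ hcos] at htan
  rw [← mul_div_cancel₀ θ (two_ne_zero' ℝ), Real.cos_two_mul, Real.sin_two_mul]
  nlinarith [mul_le_mul_of_nonneg_left htan hcos.le]

lemma one_sub_rotCos_mul_Xx_Xy_sigmaK_eq {x y : Mat3} (hx : IsSO3 x) (hy : IsSO3 y) (s N : ℕ)
    (i n : Fin 3) :
    (1 - rotCos (y⁻¹ * x)) * Xx i (Xy n (sigmaK s N)) x y =
      -(rotSym (y⁻¹ * x) i n * iteratedDeriv 2 (sigmaT s N) (rotAngle (y⁻¹ * x)) +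
        (kernelPoly s N).derivative.eval (rotCos (y⁻¹ * x)) / 2 *
          ((1 + rotCos (y⁻¹ * x)) * (rotSym (y⁻¹ * x) i n -
            if i = n then 1 - rotCos (y⁻¹ * x) else 0) +
            (1 - rotCos (y⁻¹ * x)) * rotSkew (y⁻¹ * x) i n)) := by
  have hr := hy.inv.mul hx
  rw [Xx_Xy_sigmaK_eq hx hy, iteratedDeriv_two_sigmaT, Real.sin_sq, hr.cos_rotAngle,
    hr.rotAxial_mul]
  set r := y⁻¹ * x
  have hdecomp : r i n = rotSym r i n + rotCos r * (if i = n then 1 else 0) + rotSkew r i n := by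
    simpa [Matrix.one_apply] using
      (congrFun₂ (rotSym_add_rotCos_smul_add_rotSkew r) i n).symm
  rw [hdecomp]
  split_ifs <;> ring

section

variable {r : Mat3} (hr : IsSO3 r) {A D P : ℝ} (hD : |D| ≤ 4 * P)
  (hA : (1 + rotCos r) * |A| ≤ 4 * P)
include hr hD hA

lemma IsSO3.abs_mixed_diag_le (i : Fin 3) :
    |rotSym r i i * D + A / 2 * ((1 + rotCos r) * (rotSym r i i - (1 - rotCos r)))| ≤
      (1 - rotCos r) * (4 * P) := by
  obtain ⟨hW0, hW1⟩ := hr.rotSym_diag_mem_Icc i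
  have hc := (abs_le.1 hr.abs_rotCos_le).1
  have hP : 0 ≤ 4 * P := (abs_nonneg D).trans hD
  have hsym : |rotSym r i i * D| ≤ rotSym r i i * (4 * P) := by
    rw [abs_mul, abs_of_nonneg hW0]
    gcongr
  have hrest : |A / 2 * ((1 + rotCos r) * (rotSym r i i - (1 - rotCos r)))| ≤
      (1 - rotCos r - rotSym r i i) * (4 * P) := by
    calc |A / 2 * ((1 + rotCos r) * (rotSym r i i - (1 - rotCos r)))|
        = (1 - rotCos r - rotSym r i i) * ((1 + rotCos r) * |A|) / 2 := by
          rw [abs_mul, abs_mul, abs_div, abs_two, abs_of_nonneg (by linarith : 0 ≤ 1 + rotCos r),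
            abs_of_nonpos (by linarith : rotSym r i i - (1 - rotCos r) ≤ 0)]
          ring
      _ ≤ (1 - rotCos r - rotSym r i i) * (4 * P) / 2 := by
          gcongr
      _ ≤ (1 - rotCos r - rotSym r i i) * (4 * P) :=
          half_le_self (mul_nonneg (by linarith) hP)
  linarith [abs_add_le (rotSym r i i * D)
    (A / 2 * ((1 + rotCos r) * (rotSym r i i - (1 - rotCos r))))]

lemma IsSO3.abs_mixed_offDiag_le (hAS : |A * Real.sin (rotAngle r)| ≤ 2 * P) {i n : Fin 3}
    (hin : i ≠ n) :
    |rotSym r i n * D +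
        A / 2 * ((1 + rotCos r) * rotSym r i n + (1 - rotCos r) * rotSkew r i n)| ≤
      (1 - rotCos r) * (4 * P) := by
  have hW := hr.abs_rotSym_apply_le hin
  obtain ⟨hc0, hc1⟩ := abs_le.1 hr.abs_rotCos_le
  have hsym : |rotSym r i n * D| ≤ (1 - rotCos r) / 2 * (4 * P) := by
    rw [abs_mul]
    gcongr
  have hA' : |(1 + rotCos r) * A * rotSym r i n| ≤ 4 * P * ((1 - rotCos r) / 2) := by
    rw [abs_mul, abs_mul, abs_of_nonneg (by linarith : 0 ≤ 1 + rotCos r)]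
    gcongr
    exact (abs_nonneg D).trans hD
  have hK : |A * rotSkew r i n| ≤ 2 * P := by
    refine le_trans ?_ hAS
    rw [abs_mul, abs_mul]
    refine mul_le_mul_of_nonneg_left (sq_le_sq.1 ?_) (abs_nonneg A)
    rw [Real.sin_sq, hr.cos_rotAngle]
    linarith [hr.rotSkew_apply_sq_le i n]
  have hK' : |(1 - rotCos r) * (A * rotSkew r i n)| ≤ (1 - rotCos r) * (2 * P) := by
    rw [abs_mul, abs_of_nonneg (by linarith : 0 ≤ 1 - rotCos r)]
    gcongr
  rw [abs_le] at hsym hA' hK' ⊢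
  constructor <;> linarith

end

section

variable {s N : ℕ} (hs : 4 ≤ s) (hN : s ≤ N + 1) {r : Mat3} (hr : IsSO3 r)
include hs hN hr

lemma IsSO3.abs_eval_derivative_kernelPoly_mul_sin_le (hω : 0 < rotAngle r) :
    |(kernelPoly s N).derivative.eval (rotCos r) * Real.sin (rotAngle r)| ≤
      2 * (((N : ℝ) + 1) * kernelDecay s N (rotAngle r)) := by
  have h := abs_iteratedDeriv_sigmaT_le hs hN one_le_two hω (Real.arccos_le_pi _)
  rwa [pow_one, iteratedDeriv_one_sigmaT, hr.cos_rotAngle, abs_neg, mul_comm, mul_assoc] at h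

lemma IsSO3.one_add_rotCos_mul_abs_eval_derivative_kernelPoly_le
    (hsep : 1 ≤ ((N : ℝ) + 1) * rotAngle r) :
    (1 + rotCos r) * |(kernelPoly s N).derivative.eval (rotCos r)| ≤
      4 * (((N : ℝ) + 1) ^ 2 * kernelDecay s N (rotAngle r)) := by
  have hω : 0 < rotAngle r := pos_of_mul_pos_right (one_pos.trans_le hsep) (by positivity)
  have hsin : 0 ≤ Real.sin (rotAngle r) := Real.sin_nonneg_of_nonneg_of_le_pi hω.le
    (Real.arccos_le_pi _)
  have hA := hr.abs_eval_derivative_kernelPoly_mul_sin_le hs hN hω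
  have htrig := one_add_cos_mul_le_two_mul_sin hω (Real.arccos_le_pi _)
  rw [hr.cos_rotAngle] at htrig
  have hc : 0 ≤ 1 + rotCos r := by linarith [(abs_le.1 hr.abs_rotCos_le).1]
  set A := (kernelPoly s N).derivative.eval (rotCos r)
  rw [abs_mul, abs_of_nonneg hsin] at hA
  calc (1 + rotCos r) * |A|
      ≤ ((N : ℝ) + 1) * rotAngle r * ((1 + rotCos r) * |A|) :=
        le_mul_of_one_le_left (by positivity) hsep
    _ = ((N : ℝ) + 1) * (|A| * ((1 + rotCos r) * rotAngle r)) := by ring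
    _ ≤ ((N : ℝ) + 1) * (|A| * (2 * Real.sin (rotAngle r))) := by gcongr
    _ = 2 * ((N : ℝ) + 1) * (|A| * Real.sin (rotAngle r)) := by ring
    _ ≤ 2 * ((N : ℝ) + 1) * (2 * (((N : ℝ) + 1) * kernelDecay s N (rotAngle r))) := by gcongr
    _ = 4 * (((N : ℝ) + 1) ^ 2 * kernelDecay s N (rotAngle r)) := by ring

end

lemma abs_Xy_sigmaK_le {s N : ℕ} (hs : 4 ≤ s) (hN : s ≤ N + 1) {x y : Mat3} (hx : IsSO3 x)
    (hy : IsSO3 y) (hω : 0 < rotAngle (y⁻¹ * x)) (n : Fin 3) :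
    |Xy n (sigmaK s N) x y| ≤
      cConst 1 s / (((N : ℝ) + 1) ^ (s - 1) * rotAngle (y⁻¹ * x) ^ s) := by
  have hr := hy.inv.mul hx
  rw [cConst_one_div_eq (by omega), Xy_sigmaK_eq hx hy, mul_assoc]
  refine le_trans ?_ (hr.abs_eval_derivative_kernelPoly_mul_sin_le hs hN hω)
  rw [abs_mul, abs_mul]
  refine mul_le_mul_of_nonneg_left (sq_le_sq.1 ?_) (abs_nonneg _)
  rw [Real.sin_sq, hr.cos_rotAngle]
  linarith [hr.sum_rotAxial_sq, Finset.single_le_sum (f := fun k => rotAxial (y⁻¹ * x) k ^ 2)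
    (fun k _ => sq_nonneg _) (Finset.mem_univ n)]

lemma abs_Xx_Xy_sigmaK_le {s N : ℕ} (hs : 4 ≤ s) (hN : s ≤ N + 1) {x y : Mat3} (hx : IsSO3 x)
    (hy : IsSO3 y) (hsep : 1 ≤ ((N : ℝ) + 1) * rotAngle (y⁻¹ * x)) (i n : Fin 3) :
    |Xx i (Xy n (sigmaK s N)) x y| ≤
      cConst 2 s / (((N : ℝ) + 1) ^ (s - 2) * rotAngle (y⁻¹ * x) ^ s) := by
  have hr := hy.inv.mul hx
  have hω : 0 < rotAngle (y⁻¹ * x) := pos_of_mul_pos_right (one_pos.trans_le hsep) (by positivity)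
  have hc : 0 < 1 - rotCos (y⁻¹ * x) := sub_pos.2 (Real.arccos_pos.1 hω)
  have hA := hr.one_add_rotCos_mul_abs_eval_derivative_kernelPoly_le hs hN hsep
  have hD := abs_iteratedDeriv_sigmaT_le hs hN le_rfl hω (Real.arccos_le_pi _)
  have hAS := hr.abs_eval_derivative_kernelPoly_mul_sin_le hs hN hω
  have hP := kernelDecay_nonneg s N hω.le
  refine le_trans (le_of_mul_le_mul_left ?_ hc) (four_mul_kernelDecay_le (by omega) N hω.le)
  rw [mul_pow, mul_assoc, show (2 : ℝ) ^ 2 = 4 by norm_num] at hD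
  rw [← abs_of_pos hc, ← abs_mul, abs_of_pos hc, one_sub_rotCos_mul_Xx_Xy_sigmaK_eq hx hy, abs_neg]
  split_ifs with hin
  · subst hin
    rw [eq_zero_of_neg_eq (rotSkew_apply_comm _ i i).symm, mul_zero, add_zero]
    exact hr.abs_mixed_diag_le hD hA i
  · rw [sub_zero]
    refine hr.abs_mixed_offDiag_le hD hA (hAS.trans ?_) hin
    gcongr
    exact le_self_pow₀ (by linarith [N.cast_nonneg (α := ℝ)]) two_ne_zero

end MixedDerivative

theorem localized_first_and_second_derivative_kernel_bounds_general
    {s N : ℕ} (hs : 4 ≤ s) (hN : s ≤ N + 1) {x y : Mat3} (hx : IsSO3 x) (hy : IsSO3 y)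
    (hsep : 1 ≤ ((N : ℝ) + 1) * rotAngle (y⁻¹ * x)) (n i : Fin 3) :
    |Xy n (sigmaK s N) x y| ≤
        cConst 1 s / (((N : ℝ) + 1) ^ (s - 1) * rotAngle (y⁻¹ * x) ^ s) ∧
    |Xx i (Xy n (sigmaK s N)) x y| ≤
        cConst 2 s / (((N : ℝ) + 1) ^ (s - 2) * rotAngle (y⁻¹ * x) ^ s) :=
  ⟨abs_Xy_sigmaK_le hs hN hx hy
    (pos_of_mul_pos_right (one_pos.trans_le hsep) (by positivity)) n,
    abs_Xx_Xy_sigmaK_le hs hN hx hy hsep i n⟩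

theorem localized_first_and_second_derivative_kernel_bounds
    (s N : ℕ) (hs_even : Even s) (hs : 6 ≤ s) (hN : 2 * s ≤ N)
    (x y : Mat3) (hx : IsSO3 x) (hy : IsSO3 y)
    (hsep : π / (2 * ((N : ℝ) + 1)) ≤ rotAngle (y⁻¹ * x)) (n i : Fin 3) :
    |Xy n (sigmaK s N) x y| ≤
        cConst 1 s / (((N : ℝ) + 1) ^ (s - 1) * rotAngle (y⁻¹ * x) ^ s) ∧
    |Xx i (Xy n (sigmaK s N)) x y| ≤
        cConst 2 s / (((N : ℝ) + 1) ^ (s - 2) * rotAngle (y⁻¹ * x) ^ s) := by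
  refine localized_first_and_second_derivative_kernel_bounds_general (by omega) (by omega) hx hy ?_
    n i
  rw [div_le_iff₀ (by positivity)] at hsep
  linarith [Real.two_le_pi]
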